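/- If C is a permutation class containing only finitely many simple permutations, then the generating function of the set of alternating permutations in C is algebraic over ℚ[x]. -/

import Mathlib

/-- A permutation of length `n`. -/
abbrev Perm (n : ℕ) := Equiv.Perm (Fin n)

/-- `σ` is contained in `π`: there is a strictly increasing sequence of indices of `π`
on which `π` is order isomorphic to `σ`. -/
def Contains {m n : ℕ} (σ : Perm m) (π : Perm n) : Prop :=
  ∃ f : Fin m → Fin n, StrictMono f ∧ ∀ s t : Fin m, π (f s) < π (f t) ↔ σ s < σ t

/-- A permutation class: a downset in the containment order. -/
def IsPermClass (C : ∀ n, Set (Perm n)) : Prop :=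
  ∀ ⦃m n : ℕ⦄ (σ : Perm m) (π : Perm n), π ∈ C n → Contains σ π → σ ∈ C m

/-- A set of contiguous values. -/
def IsRange {n : ℕ} (I : Finset (Fin n)) : Prop :=
  ∀ ⦃i j l : Fin n⦄, i ∈ I → l ∈ I → i ≤ j → j ≤ l → j ∈ I

/-- An interval of `π`: a set of contiguous indices mapped to a set of contiguous values. -/
def IsPermInterval {n : ℕ} (π : Perm n) (I : Finset (Fin n)) : Prop :=
  IsRange I ∧ IsRange (I.image π)

/-- A permutation is simple if its only intervals have size `0`, `1`, or `n`. -/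
def IsSimple {n : ℕ} (π : Perm n) : Prop :=
  ∀ I : Finset (Fin n), IsPermInterval π I → I.card ≤ 1 ∨ I.card = n

/-- The set of simple permutations belonging to the class `C` is finite. -/
def FinitelyManySimples (C : ∀ n, Set (Perm n)) : Prop :=
  {p : Σ n : ℕ, Perm n | p.2 ∈ C p.1 ∧ IsSimple p.2}.Finite

/-- The generating function `∑_{n ≥ 1} |S_n| xⁿ` of a set of permutations. -/
noncomputable def genFun (S : ∀ n, Set (Perm n)) : PowerSeries ℚ :=
  PowerSeries.mk fun n => if n = 0 then 0 else (Nat.card (S n) : ℚ)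

/-- A power series `f` is algebraic over `ℚ[x]` if there is a nonzero polynomial
`P(x,y) ∈ ℚ[x][y]` with `P(x,f) = 0`. -/
def IsAlgebraicOverQx (f : PowerSeries ℚ) : Prop :=
  ∃ P : Polynomial (Polynomial ℚ), P ≠ 0 ∧
    Polynomial.eval₂ Polynomial.coeToPowerSeries.ringHom f P = 0

/-- `π` is alternating: no entry (other than the first and last) lies strictly
between its two neighbours. -/
def Alternating {n : ℕ} (π : Perm n) : Prop :=
  ∀ (i : ℕ) (h : i + 2 < n),
    ¬(π ⟨i, by omega⟩ < π ⟨i + 1, by omega⟩ ∧ π ⟨i + 1, by omega⟩ < π ⟨i + 2, h⟩) ∧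
    ¬(π ⟨i + 2, h⟩ < π ⟨i + 1, by omega⟩ ∧ π ⟨i + 1, by omega⟩ < π ⟨i, by omega⟩)

/-!
Every permutation of length at least two is the inflation of a unique simple permutation, and
the blocks become unique too once, for a simple permutation of length two, the first block is
required not to be an inflation of it (Albert and Atkinson). Let a finite type function on
permutations be query-complete: the type of an inflation of a simple permutation is determined by
the types of its blocks (Brignall, Huczynska and Vatter). The types of length-three tuples of
entries, with their adjacencies, are an example, and they decide whether a permutation alternates.

Finitely many simple permutations make `C` well-partially-ordered by Nash-Williams' minimal bad
sequence argument. Hence so are the inflations of simple permutations of `C` by elements of `C`, and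
membership of such an inflation in `C` is decided by patterns of bounded length. Recording also
these patterns and the simple permutation a permutation inflates, the generating functions `fₜ` of
the types `t` satisfy a finite polynomial system `fₜ = cₜ x + ∑ (products of at least two fₛ)`.

The Jacobian of this system is the identity at `0`, so its determinant does not vanish at the
solution and every `ℚ(x)`-derivation of the field generated by the `fₜ` kills them. In
characteristic zero this makes that field algebraic over `ℚ(x)`.
-/

open MvPolynomial in
/-- The Jacobian matrix `(∂Fₜ/∂xₛ)` of a square system of polynomials, evaluated at `f`. -/
noncomputable def jacobian {R A T : Type*} [CommRing R] [CommRing A] [Algebra R A]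
    (F : T → MvPolynomial T R) (f : T → A) : Matrix T T A :=
  Matrix.of fun t s => aeval f (pderiv s (F t))

section Jacobian

open MvPolynomial

variable {R A M T : Type*} [CommRing R] [CommRing A] [Algebra R A] [AddCommGroup M] [Module A M]
  [Fintype T]

theorem derivation_aeval [Module R M] (D : Derivation R A M) (f : T → A)
    (p : MvPolynomial T R) : D (aeval f p) = ∑ s, aeval f (pderiv s p) • D (f s) := by
  classical
  induction p using MvPolynomial.induction_on with
  | C r => simp [← algebraMap_eq]
  | add p q hp hq => simp [hp, hq, add_smul, Finset.sum_add_distrib]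
  | mul_X p t hp =>
    simp only [map_mul, aeval_X, Derivation.leibniz, hp, pderiv_X, Finset.smul_sum, map_add,
      smul_eq_mul, add_smul, Finset.sum_add_distrib, mul_smul, Pi.single_apply, apply_ite (aeval f),
      map_one, map_zero, ite_smul, one_smul, zero_smul, smul_ite, smul_zero, Finset.sum_ite_eq,
      Finset.mem_univ, if_true]

variable [DecidableEq T]

theorem jacobian_algebraMap_comp {B : Type*} [CommRing B] [Algebra R B] [Algebra A B]
    [IsScalarTower R A B] (F : T → MvPolynomial T R) (f : T → A) :
    jacobian F (algebraMap A B ∘ f) = (algebraMap A B).mapMatrix (jacobian F f) := by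
  ext t s
  exact aeval_algebraMap_apply B f (pderiv s (F t))

theorem det_smul_eq_zero_of_sum_smul_eq_zero (J : Matrix T T A) (v : T → M)
    (h : ∀ t, ∑ s, J t s • v s = 0) (t : T) : J.det • v t = 0 :=
  calc J.det • v t = ∑ s, (J.adjugate * J) t s • v s := by
        simp [Matrix.adjugate_mul, Matrix.one_apply]
    _ = ∑ r, J.adjugate t r • ∑ s, J r s • v s := by
        simp only [Matrix.mul_apply, Finset.sum_smul, Finset.smul_sum, smul_smul]
        rw [Finset.sum_comm]
    _ = 0 := by simp [h]

theorem derivation_eq_zero_of_det_jacobian_ne_zero [IsDomain A] [Module.IsTorsionFree A M]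
    [Module R M] (D : Derivation R A M) {F : T → MvPolynomial T R} {f : T → A}
    (hF : ∀ t, aeval f (F t) = 0) (hdet : (jacobian F f).det ≠ 0) (t : T) : D (f t) = 0 := by
  refine (smul_eq_zero.mp (det_smul_eq_zero_of_sum_smul_eq_zero (jacobian F f) (D ∘ f)
    (fun t => ?_) t)).resolve_left hdet
  exact (derivation_aeval D f (F t)).symm.trans (by rw [hF, map_zero])

end Jacobian

theorem derivation_adjoin_eq_zero {K L M : Type*} [Field K] [Field L] [Algebra K L] (s : Set L)
    [AddCommGroup M] [Module K M] [Module (IntermediateField.adjoin K s) M]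
    (D : Derivation K (IntermediateField.adjoin K s) M)
    (h : ∀ x (hx : x ∈ s), D ⟨x, IntermediateField.subset_adjoin K s hx⟩ = 0) : D = 0 := by
  ext ⟨x, hx⟩
  induction hx using IntermediateField.adjoin_induction with
  | mem x hx => exact h x hx
  | algebraMap x => exact D.map_algebraMap x
  | add x y hx hy hDx hDy => exact (D.map_add ⟨x, hx⟩ ⟨y, hy⟩).trans (by simp [hDx, hDy])
  | inv x hx hDx => exact (D.leibniz_inv ⟨x, hx⟩).trans (by simp [hDx])
  | mul x y hx hy hDx hDy => exact (D.leibniz ⟨x, hx⟩ ⟨y, hy⟩).trans (by simp [hDx, hDy])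

open KaehlerDifferential in
theorem isAlgebraic_of_kaehlerDifferential_eq_zero {K L : Type*} [Field K] [CharZero K] [Field L]
    [Algebra K L] {s : Set L} (hs : s.Finite)
    (h : ∀ x (hx : x ∈ s), D K (IntermediateField.adjoin K s)
      ⟨x, IntermediateField.subset_adjoin K s hx⟩ = 0) {x : L} (hx : x ∈ s) : IsAlgebraic K x := by
  have hess : Algebra.EssFiniteType K (IntermediateField.adjoin K s) :=
    IntermediateField.essFiniteType_iff.mpr (IntermediateField.fg_adjoin_of_finite hs)
  have hunr : Algebra.FormallyUnramified K (IntermediateField.adjoin K s) := by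
    rw [Algebra.formallyUnramified_iff,
      ← Submodule.subsingleton_iff (IntermediateField.adjoin K s), ← subsingleton_iff_bot_eq_top,
      ← span_range_derivation, derivation_adjoin_eq_zero s (D K _) h, eq_comm,
      Submodule.span_eq_bot]
    rintro _ ⟨y, rfl⟩
    rfl
  have hsep := (Algebra.FormallyUnramified.iff_isSeparable K _).mp hunr
  have halg := Algebra.IsAlgebraic.isAlgebraic (R := K)
    (⟨x, IntermediateField.subset_adjoin K s hx⟩ : IntermediateField.adjoin K s)
  exact halg.algebraMap (A := L)

open MvPolynomial in
theorem isAlgebraic_of_det_jacobian_ne_zero {R A T : Type*} [CommRing R] [IsDomain R] [CharZero R]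
    [CommRing A] [IsDomain A] [Algebra R A] [FaithfulSMul R A] [Fintype T] [DecidableEq T]
    {F : T → MvPolynomial T R} {f : T → A} (hF : ∀ t, aeval f (F t) = 0)
    (hdet : (jacobian F f).det ≠ 0) (t : T) : IsAlgebraic R (f t) := by
  let K := FractionRing R
  let L := FractionRing A
  have : FaithfulSMul R L := .trans R A L
  let : Algebra K L := FractionRing.liftAlgebra R L
  have : IsScalarTower R K L := inferInstance
  let E := IntermediateField.adjoin K (Set.range (algebraMap A L ∘ f))
  have : IsScalarTower R E L := .to₁₃₄ R K E L
  let g : T → E := fun t => ⟨algebraMap A L (f t), IntermediateField.subset_adjoin K _ ⟨t, rfl⟩⟩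
  have hg : algebraMap E L ∘ g = algebraMap A L ∘ f := rfl
  have hgF : ∀ t, aeval g (F t) = 0 := fun t => (algebraMap E L).injective <| by
    rw [← aeval_algebraMap_apply, hg, aeval_algebraMap_apply, hF, map_zero, map_zero]
  have hgdet : (jacobian F g).det ≠ 0 := fun h => hdet <| IsFractionRing.injective A L <| by
    rw [RingHom.map_det, ← jacobian_algebraMap_comp, ← hg, jacobian_algebraMap_comp,
      ← RingHom.map_det, h, map_zero, map_zero]
  have hD : ∀ x (hx : x ∈ Set.range (algebraMap A L ∘ f)),
      KaehlerDifferential.D K E ⟨x, IntermediateField.subset_adjoin K _ hx⟩ = 0 := by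
    rintro _ ⟨t, rfl⟩
    exact derivation_eq_zero_of_det_jacobian_ne_zero
      ((KaehlerDifferential.D K E).restrictScalars R) hgF hgdet t
  have halg : IsAlgebraic K (algebraMap A L (f t)) :=
    isAlgebraic_of_kaehlerDifferential_eq_zero (Set.finite_range _) hD ⟨t, rfl⟩
  exact (isAlgebraic_algebraMap_iff (IsFractionRing.injective A L)).mp
    ((IsFractionRing.isAlgebraic_iff R K L).mpr halg)

open MvPolynomial in
theorem aeval_pderiv_prod_mem {R A T ι : Type*} [CommRing R] [CommRing A] [Algebra R A]
    [Fintype ι] [Nontrivial ι] {f : T → A} {I : Ideal A} {q : ι → MvPolynomial T R}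
    (hq : ∀ i, aeval f (q i) ∈ I) (s : T) : aeval f (pderiv s (∏ i, q i)) ∈ I := by
  classical
  obtain ⟨i, j, hij⟩ := exists_pair_ne ι
  have hj : aeval f (∏ l ∈ Finset.univ.erase i, q l) ∈ I := by
    rw [map_prod]
    exact Ideal.prod_mem I (Finset.mem_erase.mpr ⟨hij.symm, Finset.mem_univ j⟩) (hq j)
  rw [← Finset.mul_prod_erase _ _ (Finset.mem_univ i), pderiv_mul, map_add, map_mul, map_mul]
  exact add_mem (I.mul_mem_left _ hj) (I.mul_mem_right _ (hq i))

open MvPolynomial in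
theorem isAlgebraic_of_eq_add_sum_prod {k T : Type*} [Field k] [CharZero k] [Finite T]
    {γ : T → Type*} [∀ t, Fintype (γ t)] {ι : ∀ t, γ t → Type*} [∀ t g, Fintype (ι t g)]
    [∀ t g, Nontrivial (ι t g)] (τ : ∀ t g, ι t g → T) {f : T → PowerSeries k}
    (c : T → Polynomial k) (hf₀ : ∀ t, PowerSeries.constantCoeff (f t) = 0)
    (hf : ∀ t, f t = c t + ∑ g, ∏ i, f (τ t g i)) (t : T) : IsAlgebraic (Polynomial k) (f t) := by
  classical
  have := Fintype.ofFinite T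
  let F : T → MvPolynomial T (Polynomial k) := fun t =>
    X t - C (c t) - ∑ g, ∏ i, X (τ t g i)
  have hF : ∀ t, aeval f (F t) = 0 := fun t => by
    simp only [F, map_sub, map_sum, map_prod, aeval_X, aeval_C]
    rw [sub_sub, sub_eq_zero]
    exact hf t
  -- Every product has two factors vanishing at `0`, so at `0` only the linear terms `X t` remain.
  have hone : PowerSeries.constantCoeff.mapMatrix (jacobian F f) = 1 := by
    ext t s
    have hprod : ∀ g, PowerSeries.constantCoeff
        (aeval f (pderiv s (∏ i, (X (τ t g i) : MvPolynomial T (Polynomial k))))) = 0 := fun g =>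
          aeval_pderiv_prod_mem (I := RingHom.ker PowerSeries.constantCoeff)
            (fun i => by rw [aeval_X]; exact hf₀ _) s
    simp [jacobian, F, hprod, pderiv_X, Matrix.one_apply, Pi.single_apply, apply_ite]
  have : FaithfulSMul (Polynomial k) (PowerSeries k) :=
    (faithfulSMul_iff_algebraMap_injective _ _).mpr (Polynomial.coe_injective k)
  refine isAlgebraic_of_det_jacobian_ne_zero hF (fun hdet => ?_) t
  have hdet₀ := congrArg PowerSeries.constantCoeff hdet
  rw [RingHom.map_det, hone, Matrix.det_one, map_zero] at hdet₀
  exact one_ne_zero hdet₀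

/-- The generating function `∑ₙ #{x | size x = n} Xⁿ` of a type graded by `size`. Infinite fibres
count as empty. -/
noncomputable def sizeGenFun {X : Type*} (size : X → ℕ) : PowerSeries ℚ :=
  PowerSeries.mk fun n => (Nat.card {x // size x = n} : ℚ)

section SizeGenFun

variable {X Y ι : Type*}

@[simp]
theorem coeff_sizeGenFun (s : X → ℕ) (n : ℕ) :
    PowerSeries.coeff n (sizeGenFun s) = Nat.card {x // s x = n} :=
  PowerSeries.coeff_mk n _

theorem sizeGenFun_comp_equiv (s : Y → ℕ) (e : X ≃ Y) : sizeGenFun (s ∘ e) = sizeGenFun s := by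
  ext n
  simp only [coeff_sizeGenFun]
  rw [Nat.card_congr (e.subtypeEquiv (p := fun x => (s ∘ e) x = n) (q := fun y => s y = n)
    fun _ => Iff.rfl)]

theorem sizeGenFun_eq_add_compl (s : X → ℕ) [∀ n, Finite {x // s x = n}] (p : X → Prop) :
    sizeGenFun s =
      sizeGenFun (fun x : {x // p x} => s x) + sizeGenFun fun x : {x // ¬p x} => s x := by
  classical
  ext n
  let e : {x // s x = n} ≃ {x : {x // p x} // s x = n} ⊕ {x : {x // ¬p x} // s x = n} :=
    (Equiv.sumCompl p).subtypeEquivOfSubtype.symm.trans Equiv.subtypeSum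
  have := Finite.of_equiv _ e
  have := Finite.sum_left (α := {x : {x // p x} // s x = n}) {x : {x // ¬p x} // s x = n}
  have := Finite.sum_right {x : {x // p x} // s x = n} (β := {x : {x // ¬p x} // s x = n})
  simp only [coeff_sizeGenFun, map_add]
  rw [Nat.card_congr e, Nat.card_sum, Nat.cast_add]

/-- Elements of size `n` of a disjoint union, sorted by component. -/
def sigmaSizeEquiv {X : ι → Type*} (s : ∀ i, X i → ℕ) (n : ℕ) :
    {x : Σ i, X i // s x.1 x.2 = n} ≃ Σ i, {x // s i x = n} where
  toFun x := ⟨x.1.1, x.1.2, x.2⟩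
  invFun x := ⟨⟨x.1, x.2.1⟩, x.2.2⟩

theorem sizeGenFun_sigma [Fintype ι] {X : ι → Type*} (s : ∀ i, X i → ℕ)
    [∀ i n, Finite {x // s i x = n}] :
    sizeGenFun (fun x : Σ i, X i => s x.1 x.2) = ∑ i, sizeGenFun (s i) := by
  ext n
  simp only [coeff_sizeGenFun, map_sum]
  rw [← Nat.cast_sum, ← Nat.card_sigma, Nat.card_congr (sigmaSizeEquiv s n)]

open Finset in
/-- Tuples of total size `n`, sorted by the sizes of their entries. -/
noncomputable def piSizeEquiv [Fintype ι] [DecidableEq ι] {X : ι → Type*} (s : ∀ i, X i → ℕ)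
    (n : ℕ) : {x : ∀ i, X i // ∑ i, s i (x i) = n} ≃
      Σ d : univ.finsuppAntidiag n, ∀ i, {y // s i y = d.1 i} :=
  (Equiv.sigmaSubtypeFiberEquivSubtype
    (fun x : ∀ i, X i => Finsupp.equivFunOnFinite.symm fun i => s i (x i))
    (q := fun d => d ∈ univ.finsuppAntidiag n) (by simp)).symm.trans <|
  Equiv.sigmaCongrRight fun d =>
    (Equiv.subtypeEquivRight fun _ => DFunLike.ext_iff).trans
      (Equiv.subtypePiEquivPi (p := fun i y => s i y = d.1 i))

open Finset in
theorem sizeGenFun_pi [Fintype ι] {X : ι → Type*} (s : ∀ i, X i → ℕ)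
    [∀ i n, Finite {x // s i x = n}] :
    sizeGenFun (fun x : ∀ i, X i => ∑ i, s i (x i)) = ∏ i, sizeGenFun (s i) := by
  classical
  ext n
  rw [PowerSeries.coeff_prod, coeff_sizeGenFun, Nat.card_congr (piSizeEquiv s n), Nat.card_sigma]
  simp only [coeff_sizeGenFun, Nat.card_pi, Nat.cast_sum, Nat.cast_prod]
  exact sum_coe_sort (univ.finsuppAntidiag n) fun d => ∏ i, (Nat.card {y // s i y = d i} : ℚ)

theorem finite_sum_size_fiber [Fintype ι] {X : ι → Type*} (s : ∀ i, X i → ℕ)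
    [∀ i n, Finite {x // s i x = n}] (n : ℕ) : Finite {x : ∀ i, X i // ∑ i, s i (x i) = n} := by
  classical
  exact Finite.of_equiv _ (piSizeEquiv s n).symm

theorem sizeGenFun_const_one : sizeGenFun (fun _ : X => 1) =
    (Polynomial.C (Nat.card X : ℚ) * Polynomial.X : Polynomial ℚ) := by
  ext n
  simp only [coeff_sizeGenFun, Polynomial.coeff_coe, Polynomial.coeff_C_mul, Polynomial.coeff_X]
  split_ifs with h <;> simp [h]

end SizeGenFun

/-- A permutation together with its length. -/
abbrev SizedPerm := Σ n : ℕ, Perm n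

theorem perm_eq_of_lt_iff {n : ℕ} {π ρ : Perm n} (h : ∀ i j, π i < π j ↔ ρ i < ρ j) : π = ρ := by
  have hmono : StrictMono (ρ ∘ π.symm) := fun a b hab => by
    simpa [← h] using hab
  have hid : hmono.orderIsoOfSurjective _ (π.symm.trans ρ).surjective = OrderIso.refl _ :=
    Subsingleton.elim _ _
  ext1 i
  have hi : ρ (π.symm (π i)) = π i := DFunLike.congr_fun hid (π i)
  rw [← hi, π.symm_apply_apply]

section Standardization

variable {X B : Type*} [LinearOrder X] [LinearOrder B] {p q : SizedPerm} {Q : X → B}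

/-- The points `(x, Q x)` form a plot of `p`. -/
def IsStandardization (p : SizedPerm) (Q : X → B) : Prop :=
  ∃ e : Fin p.1 ≃o X, ∀ i j, p.2 i < p.2 j ↔ Q (e i) < Q (e j)

theorem exists_isStandardization [Finite X] (hQ : Function.Injective Q) :
    ∃ p, IsStandardization p Q := by
  have := Fintype.ofFinite X
  have := Fintype.ofFinite (Set.range Q)
  let e : Fin (Nat.card X) ≃o X := Fintype.orderIsoFinOfCardEq X Nat.card_eq_fintype_card.symm
  let d : Fin (Nat.card X) ≃o Set.range Q := Fintype.orderIsoFinOfCardEq _ <| by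
    rw [← Nat.card_eq_fintype_card, Nat.card_range_of_injective hQ]
  exact ⟨⟨_, (e.toEquiv.trans (Equiv.ofInjective Q hQ)).trans d.symm.toEquiv⟩, e, fun i j =>
    d.symm.lt_iff_lt⟩

theorem IsStandardization.unique (hp : IsStandardization p Q) (hq : IsStandardization q Q) :
    p = q := by
  obtain ⟨n, π⟩ := p
  obtain ⟨m, ρ⟩ := q
  obtain ⟨e, he⟩ := hp
  obtain ⟨d, hd⟩ := hq
  obtain rfl : n = m := by simpa using Fintype.card_congr (e.trans d.symm).toEquiv
  obtain rfl : e = d := Subsingleton.elim _ _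
  obtain rfl : π = ρ := perm_eq_of_lt_iff fun i j => (he i j).trans (hd i j).symm
  rfl

end Standardization

section BlockMap

variable {X Y Z A B D : Type*} [LinearOrder X] [LinearOrder Y] [LinearOrder Z] [LinearOrder A]
  [LinearOrder B] [LinearOrder D] {Q : X → A} {R : Y → B} {S : Z → D} {f : X → Y}

/-- `f` exhibits the points `(x, Q x)` as an inflation of the points `(y, R y)`, sending each point
to the block containing it. When `R` is injective, monotonicity in both coordinates says that points
of distinct blocks compare like their blocks. -/
structure IsBlockMap (Q : X → A) (R : Y → B) (f : X → Y) : Prop where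
  monotone : Monotone f
  surjective : Function.Surjective f
  map_le : ∀ ⦃a b⦄, Q a ≤ Q b → R (f a) ≤ R (f b)

theorem IsBlockMap.lt_iff (hf : IsBlockMap Q R f) (hR : Function.Injective R) {a b : X}
    (hab : f a ≠ f b) : Q a < Q b ↔ R (f a) < R (f b) :=
  ⟨fun h => (hf.map_le h.le).lt_of_ne (hR.ne hab),
    fun h => lt_of_not_ge fun h' => h.not_ge (hf.map_le h')⟩

theorem IsBlockMap.comp {g : Y → Z} (hg : IsBlockMap R S g) (hf : IsBlockMap Q R f) :
    IsBlockMap Q S (g ∘ f) where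
  monotone := hg.monotone.comp hf.monotone
  surjective := hg.surjective.comp hf.surjective
  map_le _ _ h := hg.map_le (hf.map_le h)

theorem isBlockMap_orderIso (e : X ≃o Y) (he : ∀ a b, Q a < Q b ↔ R (e a) < R (e b)) :
    IsBlockMap Q R e where
  monotone := e.monotone
  surjective := e.surjective
  map_le _ _ h := le_of_not_gt fun h' => h.not_gt ((he _ _).mpr h')

theorem IsBlockMap.contains {n m : ℕ} {π : Perm n} {σ : Perm m} {f : Fin n → Fin m}
    (hf : IsBlockMap π σ f) : Contains σ π := by
  choose g hg using hf.surjective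
  refine ⟨g, fun a b hab => hf.monotone.reflect_lt (by rwa [hg, hg]), fun a b => ?_⟩
  rcases eq_or_ne a b with rfl | hab
  · simp
  · rw [hf.lt_iff σ.injective (by rwa [hg, hg]), hg, hg]

end BlockMap

section Block

variable {X Y A : Type*} [LinearOrder X] [LinearOrder A] {Q : X → A} {f : X → Y}

/-- The points of the fibre of `f` over `i` form a plot of `p`. -/
def IsBlock (Q : X → A) (f : X → Y) (i : Y) (p : SizedPerm) : Prop :=
  IsStandardization p fun a : {a // f a = i} => Q a

theorem exists_isBlock [Finite X] (hQ : Function.Injective Q) (f : X → Y) (i : Y) :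
    ∃ p, IsBlock Q f i p :=
  exists_isStandardization (hQ.comp Subtype.val_injective)

theorem IsBlock.pos {i : Y} {p : SizedPerm} (h : IsBlock Q f i p) (hf : Function.Surjective f) :
    0 < p.1 := by
  obtain ⟨e, -⟩ := h
  obtain ⟨a, ha⟩ := hf i
  exact Fin.pos (e.symm ⟨a, ha⟩)

theorem IsBlock.contains {n m : ℕ} {π : Perm n} {f : Fin n → Fin m} {i : Fin m} {p : SizedPerm}
    (h : IsBlock π f i p) : Contains p.2 π := by
  obtain ⟨e, he⟩ := h
  exact ⟨fun a => e a, fun _ _ hab => e.strictMono hab, fun a b => (he a b).symm⟩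

end Block

section Inflation

variable {π σ : SizedPerm} {α : Fin σ.1 → SizedPerm}

/-- The vertical coordinate of a point in the inflation of `σ` by the permutations `α i`. -/
def inflationValue (σ : SizedPerm) (α : Fin σ.1 → SizedPerm) (x : Σₗ i, Fin (α i).1) :
    Fin σ.1 ×ₗ ℕ :=
  toLex (σ.2 (ofLex x).1, ((α (ofLex x).1).2 (ofLex x).2).val)

theorem inflationValue_injective (σ : SizedPerm) (α : Fin σ.1 → SizedPerm) :
    Function.Injective (inflationValue σ α) := by
  rintro ⟨i, a⟩ ⟨j, b⟩ h
  obtain ⟨hij, hab⟩ := Prod.mk.inj (congrArg ofLex h)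
  obtain rfl : i = j := σ.2.injective hij
  obtain rfl : a = b := (α i).2.injective (Fin.ext hab)
  rfl

theorem inflationValue_lt_iff {i : Fin σ.1} {a b : Fin (α i).1} :
    inflationValue σ α (toLex ⟨i, a⟩) < inflationValue σ α (toLex ⟨i, b⟩) ↔
      (α i).2 a < (α i).2 b := by
  simp only [inflationValue, Prod.Lex.toLex_lt_toLex, ofLex_toLex, lt_self_iff_false, true_and,
    false_or]
  rfl

/-- `π` is the inflation of `σ` whose `i`th block is `α i`. -/
def IsInflation (π σ : SizedPerm) (α : Fin σ.1 → SizedPerm) : Prop :=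
  IsStandardization π (inflationValue σ α)

theorem exists_isInflation (σ : SizedPerm) (α : Fin σ.1 → SizedPerm) : ∃ π, IsInflation π σ α :=
  exists_isStandardization (inflationValue_injective σ α)

/-- The inflation of `σ` by the permutations `α i`. -/
noncomputable def inflate (σ : SizedPerm) (α : Fin σ.1 → SizedPerm) : SizedPerm :=
  (exists_isInflation σ α).choose

theorem isInflation_inflate (σ : SizedPerm) (α : Fin σ.1 → SizedPerm) :
    IsInflation (inflate σ α) σ α :=
  (exists_isInflation σ α).choose_spec

theorem IsInflation.eq_inflate (h : IsInflation π σ α) : π = inflate σ α :=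
  h.unique (isInflation_inflate σ α)

theorem size_inflate (σ : SizedPerm) (α : Fin σ.1 → SizedPerm) :
    (inflate σ α).1 = ∑ i, (α i).1 := by
  obtain ⟨e, -⟩ := isInflation_inflate σ α
  simpa using Fintype.card_congr (e.toEquiv.trans ofLex)

theorem isBlockMap_fst (hα : ∀ i, 0 < (α i).1) :
    IsBlockMap (inflationValue σ α) σ.2 fun x => (ofLex x).1 where
  monotone := by
    rintro _ _ (⟨_, _, h⟩ | ⟨_, _, -⟩)
    exacts [h.le, le_rfl]
  surjective i := ⟨toLex ⟨i, 0, hα i⟩, rfl⟩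
  map_le _ _ h := Prod.Lex.monotone_fst _ _ h

theorem IsInflation.exists_isBlockMap (h : IsInflation π σ α) (hα : ∀ i, 0 < (α i).1) :
    ∃ f, IsBlockMap π.2 σ.2 f ∧ ∀ i, IsBlock π.2 f i (α i) := by
  obtain ⟨e, he⟩ := h
  refine ⟨fun a => (ofLex (e a)).1, (isBlockMap_fst hα).comp (isBlockMap_orderIso e he),
    fun i => ?_⟩
  let d : Fin (α i).1 → {a // (ofLex (e a)).1 = i} := fun b =>
    ⟨e.symm (toLex ⟨i, b⟩), by rw [e.apply_symm_apply, ofLex_toLex]⟩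
  have hd : StrictMono d := fun b c hbc => e.symm.strictMono (Sigma.Lex.right _ _ hbc)
  have hd' : Function.Surjective d := by
    rintro ⟨a, rfl⟩
    exact ⟨(ofLex (e a)).2, Subtype.ext (e.symm_apply_apply a)⟩
  refine ⟨hd.orderIsoOfSurjective d hd', fun b c => ?_⟩
  simp [d, he, inflationValue_lt_iff]

theorem IsBlockMap.isInflation {f : Fin π.1 → Fin σ.1} (hf : IsBlockMap π.2 σ.2 f)
    (hα : ∀ i, IsBlock π.2 f i (α i)) : IsInflation π σ α := by
  choose e he using hα
  let d : (Σₗ i, Fin (α i).1) → Fin π.1 := fun x => e (ofLex x).1 (ofLex x).2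
  have hfd : ∀ x, f (d x) = (ofLex x).1 := fun x => (e (ofLex x).1 (ofLex x).2).2
  have hd : StrictMono d := by
    rintro _ _ (⟨a, b, hij⟩ | ⟨a, b, hab⟩)
    · exact hf.monotone.reflect_lt <|
        (hfd (toLex ⟨_, a⟩)).trans_lt (hij.trans_eq (hfd (toLex ⟨_, b⟩)).symm)
    · exact (e _).strictMono hab
  have hd' : Function.Surjective d := fun a =>
    ⟨toLex ⟨f a, (e (f a)).symm ⟨a, rfl⟩⟩,
      congrArg Subtype.val ((e (f a)).apply_symm_apply ⟨a, rfl⟩)⟩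
  have hval : ∀ x y, inflationValue σ α x < inflationValue σ α y ↔ π.2 (d x) < π.2 (d y) := by
    intro x y
    obtain ⟨⟨i, a⟩, rfl⟩ := toLex.surjective x
    obtain ⟨⟨j, b⟩, rfl⟩ := toLex.surjective y
    rcases eq_or_ne i j with rfl | hij
    · exact inflationValue_lt_iff.trans (he i a b)
    · rw [hf.lt_iff σ.2.injective (by rw [hfd, hfd]; exact hij), hfd, hfd]
      simpa [inflationValue, Prod.Lex.toLex_lt_toLex] using fun h => (hij h).elim
  let E := hd.orderIsoOfSurjective d hd'
  exact ⟨E.symm, fun a b => by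
    rw [hval, show d (E.symm a) = a from E.apply_symm_apply a,
      show d (E.symm b) = b from E.apply_symm_apply b]⟩

end Inflation

section Interval

variable {n m : ℕ}

theorem IsRange.image {φ : Fin n → Fin m} {I : Finset (Fin n)} (hI : IsRange I) (hφ : Monotone φ)
    (hφ' : Function.Surjective φ) : IsRange (I.image φ) := by
  intro i j l hi hl hij hjl
  obtain ⟨a, ha, rfl⟩ := Finset.mem_image.mp hi
  obtain ⟨b, rfl⟩ := hφ' j
  obtain ⟨c, hc, rfl⟩ := Finset.mem_image.mp hl
  rcases hij.eq_or_lt with hab | hab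
  · exact hab ▸ hi
  rcases hjl.eq_or_lt with hbc | hbc
  · exact hbc ▸ hl
  exact Finset.mem_image_of_mem φ (hI ha hc (hφ.reflect_lt hab).le (hφ.reflect_lt hbc).le)

theorem isRange_fiber {φ : Fin n → Fin m} (hφ : Monotone φ) (i : Fin m) :
    IsRange (Finset.univ.filter fun a => φ a = i) := by
  intro a b c ha hc hab hbc
  simp only [Finset.mem_filter_univ] at ha hc ⊢
  exact le_antisymm (hc ▸ hφ hbc) (ha ▸ hφ hab)

theorem isRange_erase {c : Fin n} (hc : IsBot c ∨ IsTop c) : IsRange (Finset.univ.erase c) := by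
  intro i j l hi hl hij hjl
  simp only [Finset.mem_erase, Finset.mem_univ, and_true] at hi hl ⊢
  rintro rfl
  rcases hc with hc | hc
  exacts [hi (hij.antisymm (hc i)), hl ((hc l).antisymm hjl)]

theorem IsRange.isBot_or_isTop_apply {φ : Fin n → Fin m} {I : Finset (Fin n)} (hI : IsRange I)
    (hφ : Monotone φ) (himage : I.image φ = Finset.univ) {c : Fin n} (hc : c ∉ I) :
    IsBot (φ c) ∨ IsTop (φ c) := by
  have hφI : ∀ j, ∃ x ∈ I, φ x = j := fun j => Finset.mem_image.mp (himage ▸ Finset.mem_univ j)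
  by_contra! h
  simp only [IsBot, IsTop, not_forall, not_le] at h
  obtain ⟨⟨i, hi⟩, j, hj⟩ := h
  obtain ⟨x, hx, rfl⟩ := hφI i
  obtain ⟨y, hy, rfl⟩ := hφI j
  exact hc (hI hx hy (hφ.reflect_lt hi).le (hφ.reflect_lt hj).le)

/-- The map contracting `I` to its point `i₀` and fixing all other points. -/
def collapse (I : Finset (Fin n)) (i₀ j : Fin n) : Fin n :=
  if j ∈ I then i₀ else j

theorem IsRange.monotone_collapse {I : Finset (Fin n)} (hI : IsRange I) {i₀ : Fin n}
    (hi₀ : i₀ ∈ I) : Monotone (collapse I i₀) := by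
  intro a b hab
  unfold collapse
  split_ifs with ha hb hb
  · rfl
  · exact le_of_not_ge fun h => hb (hI ha hi₀ hab h)
  · exact le_of_not_ge fun h => ha (hI hi₀ hb h hab)
  · exact hab

theorem apply_collapse (σ : Perm n) (I : Finset (Fin n)) (i₀ j : Fin n) :
    σ (collapse I i₀ j) = collapse (I.image σ) (σ i₀) (σ j) := by
  simp only [collapse, apply_ite σ, σ.injective.mem_finset_image]

theorem exists_isBlockMap_of_monotone {σ : Perm m} {c : Fin m → Fin m} (hc : Monotone c)
    (hσc : ∀ a b, σ a ≤ σ b → σ (c a) ≤ σ (c b)) :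
    ∃ (k : ℕ) (ρ : Perm k) (g : Fin m → Fin k),
      IsBlockMap σ ρ g ∧ ∀ a b, g a = g b ↔ c a = c b := by
  have hQ : Function.Injective fun x : Set.range c => σ x :=
    σ.injective.comp Subtype.val_injective
  obtain ⟨⟨k, ρ⟩, e, he⟩ := exists_isStandardization hQ
  have hrange : IsBlockMap σ (fun x : Set.range c => σ x) (Set.rangeFactorization c) :=
    ⟨hc, Set.rangeFactorization_surjective, hσc⟩
  have hstd : IsBlockMap (fun x : Set.range c => σ x) ρ e.symm :=
    isBlockMap_orderIso e.symm fun a b => by simp [he]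
  exact ⟨k, ρ, _, hstd.comp hrange, fun a b => by simp [Set.rangeFactorization]⟩

theorem IsPermInterval.exists_isBlockMap {σ : Perm m} {I : Finset (Fin m)}
    (hI : IsPermInterval σ I) (hone : 1 < I.card) (hm : I.card < m) :
    ∃ (k : ℕ) (ρ : Perm k) (g : Fin m → Fin k), 2 ≤ k ∧ k < m ∧ IsBlockMap σ ρ g := by
  obtain ⟨i₀, hi₀, i₁, hi₁, hne⟩ := Finset.one_lt_card.mp hone
  obtain ⟨j₀, -, hj₀⟩ : ∃ j ∈ Finset.univ, j ∉ I :=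
    Finset.exists_mem_notMem_of_card_lt_card (by simpa using hm)
  obtain ⟨k, ρ, g, hg, hgc⟩ := exists_isBlockMap_of_monotone (σ := σ)
    (hI.1.monotone_collapse hi₀) fun a b hab => by
      simpa only [apply_collapse] using
        hI.2.monotone_collapse (Finset.mem_image_of_mem σ hi₀) hab
  have hg₁ : g i₀ = g i₁ := (hgc _ _).mpr (by simp [collapse, hi₀, hi₁])
  have hgj : g i₀ ≠ g j₀ := fun h => hj₀ <| by
    have hij : i₀ = j₀ := by simpa [collapse, hi₀, hj₀] using (hgc _ _).mp h
    exact hij ▸ hi₀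
  refine ⟨k, ρ, g, Fin.nontrivial_iff_two_le.mp ⟨_, _, hgj⟩, ?_, hg⟩
  simpa using Fintype.card_lt_of_surjective_not_injective g hg.surjective fun h => hne (h hg₁)

theorem exists_simple_isBlockMap (π : Perm n) (hn : 2 ≤ n) :
    ∃ (m : ℕ) (σ : Perm m) (f : Fin n → Fin m), 2 ≤ m ∧ IsSimple σ ∧ IsBlockMap π σ f := by
  classical
  have hex : ∃ m, 2 ≤ m ∧ ∃ (σ : Perm m) (f : Fin n → Fin m), IsBlockMap π σ f :=
    ⟨n, hn, π, id, monotone_id, Function.surjective_id, fun _ _ => id⟩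
  obtain ⟨hm, σ, f, hf⟩ := Nat.find_spec hex
  refine ⟨Nat.find hex, σ, f, hm, fun I hI => ?_, hf⟩
  by_contra! h
  have hle : I.card ≤ Nat.find hex := by simpa using I.card_le_univ
  obtain ⟨k, ρ, g, hk, hlt, hg⟩ := hI.exists_isBlockMap h.1 (hle.lt_of_ne h.2)
  exact Nat.find_min hex hlt ⟨hk, ρ, _, hg.comp hf⟩

theorem IsSimple.le_two_of_corner {σ : Perm m} (hσ : IsSimple σ) {c : Fin m}
    (hc : IsBot c ∨ IsTop c) (hσc : IsBot (σ c) ∨ IsTop (σ c)) : m ≤ 2 := by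
  have himage : (Finset.univ.erase c).image σ = Finset.univ.erase (σ c) := by
    rw [Finset.image_erase σ.injective, Finset.image_univ_equiv]
  have hcard := hσ _ ⟨isRange_erase hc, himage ▸ isRange_erase hσc⟩
  rw [Finset.card_erase_of_mem (Finset.mem_univ c), Finset.card_univ, Fintype.card_fin] at hcard
  omega

end Interval

section Uniqueness

variable {n m k : ℕ} {π : Perm n} {σ : Perm m} {τ : Perm k} {f : Fin n → Fin m} {g : Fin n → Fin k}

theorem IsBlockMap.monotone_conj (hf : IsBlockMap π σ f) : Monotone (σ ∘ f ∘ π.symm) :=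
  fun _ _ h => hf.map_le (by simpa using h)

theorem image_conj (J : Finset (Fin n)) :
    (J.image π).image (σ ∘ f ∘ π.symm) = (J.image f).image σ := by
  rw [Finset.image_image, Finset.image_image]
  exact Finset.image_congr fun x _ => by simp

theorem IsBlockMap.isPermInterval_image (hf : IsBlockMap π σ f) {J : Finset (Fin n)}
    (hJ : IsPermInterval π J) : IsPermInterval σ (J.image f) := by
  refine ⟨hJ.1.image hf.monotone hf.surjective, ?_⟩
  rw [← image_conj]
  exact hJ.2.image hf.monotone_conj
    (σ.surjective.comp (hf.surjective.comp π.symm.surjective))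

theorem IsBlockMap.isPermInterval_fiber (hf : IsBlockMap π σ f) (i : Fin m) :
    IsPermInterval π (Finset.univ.filter fun a => f a = i) := by
  refine ⟨isRange_fiber hf.monotone i, ?_⟩
  convert isRange_fiber hf.monotone_conj (σ i)
  ext b
  obtain ⟨a, rfl⟩ := π.surjective b
  simp

theorem IsBlockMap.eq_two_of_not_refines (hf : IsBlockMap π σ f) (hg : IsBlockMap π τ g)
    (hσ : IsSimple σ) (hm : 2 ≤ m) (hk : 2 ≤ k) {a b : Fin n} (hgab : g a = g b)
    (hfab : f a ≠ f b) : m = 2 := by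
  -- A fibre `J` of `g` meeting two fibres of `f` has an interval of size at least two, hence all of
  -- `σ`, as its image, so any point outside `J` is sent to a corner of `σ`.
  let J := Finset.univ.filter fun x => g x = g a
  have hJ : IsPermInterval π J := hg.isPermInterval_fiber (g a)
  have himage : J.image f = Finset.univ := by
    have hone : 1 < (J.image f).card := Finset.one_lt_card.mpr
      ⟨f a, Finset.mem_image_of_mem f (by simp [J]), f b,
        Finset.mem_image_of_mem f (by simp [J, hgab]), hfab⟩
    have hcard := (hσ _ (hf.isPermInterval_image hJ)).resolve_left hone.not_ge
    exact Finset.eq_univ_of_card _ (hcard.trans (Fintype.card_fin m).symm)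
  obtain ⟨c, hc⟩ : ∃ c, g c ≠ g a := by
    have : Nontrivial (Fin k) := Fin.nontrivial_iff_two_le.mpr hk
    obtain ⟨i, hi⟩ := exists_ne (g a)
    obtain ⟨c, rfl⟩ := hg.surjective i
    exact ⟨c, hi⟩
  have hcJ : c ∉ J := by simpa [J] using hc
  refine le_antisymm (hσ.le_two_of_corner (c := f c) ?_ ?_) hm
  · exact hJ.1.isBot_or_isTop_apply hf.monotone himage hcJ
  · have hconj := hJ.2.isBot_or_isTop_apply hf.monotone_conj (c := π c)
      (by rw [image_conj, himage, Finset.image_univ_equiv])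
      (by rwa [π.injective.mem_finset_image])
    simpa only [Function.comp_apply, π.symm_apply_apply] using hconj

theorem IsBlockMap.eq_of_refines (hf : IsBlockMap π σ f) (hg : IsBlockMap π τ g)
    (hτ : IsSimple τ) (hm : 2 ≤ m) (h : ∀ a b, g a = g b → f a = f b) {a b : Fin n}
    (hab : f a = f b) : g a = g b := by
  rcases hτ _ (hg.isPermInterval_image (hf.isPermInterval_fiber (f a))) with hc | hc
  · rw [Finset.card_le_one] at hc
    exact hc _ (Finset.mem_image_of_mem g (by simp)) _ (Finset.mem_image_of_mem g (by simp [hab]))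
  · have huniv := Finset.eq_univ_of_card _ (hc.trans (Fintype.card_fin k).symm)
    have : Nontrivial (Fin m) := Fin.nontrivial_iff_two_le.mpr hm
    obtain ⟨i, hi⟩ := exists_ne (f a)
    obtain ⟨c, rfl⟩ := hf.surjective i
    obtain ⟨d, hd, hdc⟩ := Finset.mem_image.mp (huniv ▸ Finset.mem_univ (g c))
    rw [Finset.mem_filter_univ] at hd
    exact absurd ((h _ _ hdc).symm.trans hd) hi

theorem IsBlockMap.eq_of_fibers (hf : IsBlockMap π σ f) (hg : IsBlockMap π τ g)
    (h : ∀ a b, f a = f b ↔ g a = g b) :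
    (⟨m, σ⟩ : SizedPerm) = ⟨k, τ⟩ ∧ ∀ a, (f a).val = (g a).val := by
  choose s hs using hf.surjective
  have hgs : ∀ a, g (s (f a)) = g a := fun a => (h _ _).mp (hs (f a))
  have hmono : StrictMono (g ∘ s) := fun i j hij =>
    (hg.monotone (hf.monotone.reflect_lt (by rwa [hs, hs])).le).lt_of_ne fun hgij => hij.ne <| by
      rw [← hs i, ← hs j, (h _ _).mpr hgij]
  let e : Fin m ≃o Fin k := hmono.orderIsoOfSurjective _ fun j =>
    (hg.surjective j).imp' f fun a ha => (hgs a).trans ha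
  obtain rfl : m = k := by simpa using Fintype.card_congr e.toEquiv
  obtain rfl : f = g := by
    funext a
    rw [← hgs a]
    exact (DFunLike.congr_fun (Subsingleton.elim e (OrderIso.refl _)) (f a)).symm
  obtain rfl : σ = τ := perm_eq_of_lt_iff fun i j => by
    rcases eq_or_ne i j with rfl | hij
    · simp
    · have hfs : f (s i) ≠ f (s j) := by rwa [hs, hs]
      simpa only [hs] using
        (hf.lt_iff σ.injective hfs).symm.trans (hg.lt_iff τ.injective hfs)
  exact ⟨rfl, fun _ => rfl⟩

theorem perm_two_eq : ∀ {σ τ : Perm 2}, (σ 0 < σ 1 ↔ τ 0 < τ 1) → σ = τ := by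
  decide

theorem IsBlockMap.eq_of_two {σ τ : Perm 2} {f g : Fin n → Fin 2} (hf : IsBlockMap π σ f)
    (hg : IsBlockMap π τ g) : σ = τ := by
  obtain ⟨x, hfx, hgx⟩ : ∃ x, f x = 0 ∧ g x = 0 := by
    obtain ⟨a, ha⟩ := hf.surjective 0
    obtain ⟨b, hb⟩ := hg.surjective 0
    exact ⟨min a b, Fin.le_zero_iff.mp (ha ▸ hf.monotone (min_le_left a b)),
      Fin.le_zero_iff.mp (hb ▸ hg.monotone (min_le_right a b))⟩
  obtain ⟨y, hfy, hgy⟩ : ∃ y, f y = 1 ∧ g y = 1 := by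
    obtain ⟨a, ha⟩ := hf.surjective 1
    obtain ⟨b, hb⟩ := hg.surjective 1
    exact ⟨max a b, (Fin.le_last _).antisymm (ha.ge.trans (hf.monotone (le_max_left a b))),
      (Fin.le_last _).antisymm (hb.ge.trans (hg.monotone (le_max_right a b)))⟩
  have hσ := hf.lt_iff σ.injective (a := x) (b := y) (by simp [hfx, hfy])
  have hτ := hg.lt_iff τ.injective (a := x) (b := y) (by simp [hgx, hgy])
  rw [hfx, hfy] at hσ
  rw [hgx, hgy] at hτ
  exact perm_two_eq (hσ.symm.trans hτ)

theorem IsBlockMap.unique (hf : IsBlockMap π σ f) (hg : IsBlockMap π τ g)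
    (hσ : IsSimple σ) (hτ : IsSimple τ) (hm : 2 ≤ m) (hk : 2 ≤ k) :
    (⟨m, σ⟩ : SizedPerm) = ⟨k, τ⟩ ∧ (m ≠ 2 → ∀ a, (f a).val = (g a).val) := by
  by_cases hgf : ∀ a b, g a = g b → f a = f b
  · exact (hf.eq_of_fibers hg fun a b => ⟨hf.eq_of_refines hg hτ hm hgf, hgf a b⟩).imp_right
      fun h _ => h
  by_cases hfg : ∀ a b, f a = f b → g a = g b
  · exact (hf.eq_of_fibers hg fun a b => ⟨hfg a b, hg.eq_of_refines hf hσ hk hfg⟩).imp_right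
      fun h _ => h
  push Not at hgf hfg
  obtain ⟨a, b, hgab, hfab⟩ := hgf
  obtain ⟨c, d, hfcd, hgcd⟩ := hfg
  obtain rfl := hf.eq_two_of_not_refines hg hσ hm hk hgab hfab
  obtain rfl := hg.eq_two_of_not_refines hf hτ hk hm hfcd hgcd
  obtain rfl := hf.eq_of_two hg
  exact ⟨rfl, fun h => absurd rfl h⟩

end Uniqueness

/-- `p` is an inflation of `σ` by nonempty permutations. -/
def IsInflationOf (p σ : SizedPerm) : Prop :=
  ∃ f : Fin p.1 → Fin σ.1, IsBlockMap p.2 σ.2 f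

/-- The blocks `α` are the canonical ones for inflations of `σ`: they are nonempty and, if `σ` has
length two, the first block is not itself an inflation of `σ`. -/
structure IsCanonical (σ : SizedPerm) (α : Fin σ.1 → SizedPerm) : Prop where
  pos : ∀ i, 0 < (α i).1
  not_isInflationOf : σ.1 = 2 → ∀ i : Fin σ.1, i.val = 0 → ¬ IsInflationOf (α i) σ

section Canonical

variable {n : ℕ} {π : Perm n} {σ : Perm 2} {f : Fin n → Fin 2}

theorem IsBlockMap.exists_smaller_fiber (hf : IsBlockMap π σ f) {p : SizedPerm}
    (hp : IsBlock π f 0 p) (hpσ : IsInflationOf p ⟨2, σ⟩) :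
    ∃ f', IsBlockMap π σ f' ∧ (∀ a, f' a = 0 → f a = 0) ∧ ∃ a, f a = 0 ∧ f' a ≠ 0 := by
  obtain ⟨e, he⟩ := hp
  obtain ⟨g, hg⟩ := hpσ
  have hfib : IsBlockMap (fun a : {a // f a = 0} => π a) σ (g ∘ e.symm) :=
    hg.comp (isBlockMap_orderIso e.symm fun a b => by simp [he])
  -- Split the first block according to `p` and merge its second part with the second block.
  let f' : Fin n → Fin 2 := fun a => if h : f a = 0 then g (e.symm ⟨a, h⟩) else 1
  have hzero : ∀ a (h : f a = 0), f' a = g (e.symm ⟨a, h⟩) := fun a h => dif_pos h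
  have hone : ∀ a, f a = 1 → f' a = 1 := fun a h => dif_neg (by simp [h])
  have hcases : ∀ a, f a = 0 ∨ f a = 1 := fun a => by omega
  refine ⟨f', ⟨fun a b hab => ?_, fun j => ?_, fun a b hab => ?_⟩, fun a ha => ?_, ?_⟩
  · rcases hcases b with hb | hb
    · have ha : f a = 0 := Fin.le_zero_iff.mp (hb ▸ hf.monotone hab)
      rw [hzero a ha, hzero b hb]
      exact hfib.monotone hab
    · exact hone b hb ▸ Fin.le_last _
  · obtain ⟨a, ha⟩ := hfib.surjective j
    exact ⟨a, (hzero a a.2).trans ha⟩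
  · have hle := hf.map_le hab
    rcases hcases a with ha | ha <;> rcases hcases b with hb | hb
    · rw [hzero a ha, hzero b hb]
      exact hfib.map_le hab
    · rw [ha, hb] at hle
      rw [hone b hb]
      obtain h | h : f' a = 0 ∨ f' a = 1 := by omega
      exacts [h ▸ hle, h ▸ le_rfl]
    · rw [ha, hb] at hle
      rw [hone a ha]
      obtain h | h : f' b = 0 ∨ f' b = 1 := by omega
      exacts [h ▸ hle, h ▸ le_rfl]
    · rw [hone a ha, hone b hb]
  · exact (hcases a).resolve_right fun h => by simp [hone a h] at ha
  · obtain ⟨a, ha⟩ := hfib.surjective 1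
    exact ⟨a, a.2, by simp [hzero a a.2, show g (e.symm a) = 1 from ha]⟩

theorem IsBlockMap.exists_not_isInflationOf (hf : IsBlockMap π σ f) :
    ∃ f', IsBlockMap π σ f' ∧ ∀ p, IsBlock π f' 0 p → ¬ IsInflationOf p ⟨2, σ⟩ := by
  obtain ⟨f', hf', hmin⟩ := exists_minimalFor_of_wellFoundedLT
    (fun f : Fin n → Fin 2 => IsBlockMap π σ f) (fun f => {a | f a = 0}) ⟨f, hf⟩
  refine ⟨f', hf', fun p hp hpσ => ?_⟩
  obtain ⟨f'', hf'', hsub, a, ha, ha'⟩ := hf'.exists_smaller_fiber hp hpσ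
  exact ha' (hmin hf'' hsub ha)

theorem IsBlockMap.isInflationOf_of_ne {f' : Fin n → Fin 2} (hf : IsBlockMap π σ f)
    (hf' : IsBlockMap π σ f') {p : SizedPerm} (hp : IsBlock π f 0 p) {a : Fin n} (ha : f a = 0)
    (ha' : f' a ≠ 0) : IsInflationOf p ⟨2, σ⟩ := by
  obtain ⟨e, he⟩ := hp
  refine ⟨fun x => f' (e x), fun x y hxy => hf'.monotone (e.monotone hxy), fun (j : Fin 2) => ?_,
    fun x y hxy => hf'.map_le (le_of_not_gt fun h => hxy.not_gt ((he y x).mpr h))⟩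
  obtain rfl | rfl : j = 0 ∨ j = 1 := by omega
  · obtain ⟨b, hb⟩ := hf'.surjective 0
    have hba : b < a := hf'.monotone.reflect_lt (hb ▸ Fin.pos_iff_ne_zero.mpr ha')
    have hfb : f b = 0 := Fin.le_zero_iff.mp (ha ▸ hf.monotone hba.le)
    exact ⟨e.symm ⟨b, hfb⟩, by simp [hb]⟩
  · exact ⟨e.symm ⟨a, ha⟩, by simpa using Fin.eq_one_of_ne_zero _ ha'⟩

end Canonical

theorem exists_isCanonical {π : SizedPerm} (hπ : 2 ≤ π.1) :
    ∃ σ : SizedPerm, 2 ≤ σ.1 ∧ IsSimple σ.2 ∧ ∃ α, IsCanonical σ α ∧ inflate σ α = π := by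
  obtain ⟨m, σ, f₀, hm, hσ, hf₀⟩ := exists_simple_isBlockMap π.2 hπ
  obtain ⟨f, hf, hcan⟩ : ∃ f, IsBlockMap π.2 σ f ∧ (m = 2 → ∀ i : Fin m, i.val = 0 →
      ∀ p, IsBlock π.2 f i p → ¬ IsInflationOf p ⟨m, σ⟩) := by
    by_cases h : m = 2
    · subst h
      obtain ⟨f, hf, hcan⟩ := hf₀.exists_not_isInflationOf
      refine ⟨f, hf, fun _ i hi => ?_⟩
      obtain rfl : i = 0 := Fin.ext hi
      exact hcan
    · exact ⟨f₀, hf₀, fun h' => absurd h' h⟩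
  choose α hα using fun i => exists_isBlock π.2.injective f i
  exact ⟨⟨m, σ⟩, hm, hσ, α,
    ⟨fun i => (hα i).pos hf.surjective, fun h i hi => hcan h i hi _ (hα i)⟩,
    (IsBlockMap.isInflation (σ := ⟨m, σ⟩) hf hα).eq_inflate.symm⟩

section CanonicalUnique

variable {σ : SizedPerm} {α : Fin σ.1 → SizedPerm}

theorem IsCanonical.exists_isBlockMap (h : IsCanonical σ α) :
    ∃ f, IsBlockMap (inflate σ α).2 σ.2 f ∧ ∀ i, IsBlock (inflate σ α).2 f i (α i) :=
  (isInflation_inflate σ α).exists_isBlockMap h.pos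

theorem IsCanonical.isBlockMap_unique {n : ℕ} {π : Perm n} {f f' : Fin n → Fin σ.1}
    {α' : Fin σ.1 → SizedPerm} (h : IsCanonical σ α) (h' : IsCanonical σ α') (hσ : IsSimple σ.2)
    (hσ₂ : 2 ≤ σ.1) (hf : IsBlockMap π σ.2 f) (hf' : IsBlockMap π σ.2 f')
    (hα : ∀ i, IsBlock π f i (α i)) (hα' : ∀ i, IsBlock π f' i (α' i)) : f = f' := by
  by_cases hm : σ.1 = 2
  · obtain ⟨m, σ⟩ := σ
    obtain rfl : m = 2 := hm
    change Fin n → Fin 2 at f f'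
    funext a
    have hzero : f a = 0 ↔ f' a = 0 := by
      constructor <;> intro ha <;> by_contra ha'
      · exact h.not_isInflationOf rfl 0 rfl (hf.isInflationOf_of_ne hf' (hα 0) ha ha')
      · exact h'.not_isInflationOf rfl 0 rfl (hf'.isInflationOf_of_ne hf (hα' 0) ha ha')
    omega
  · exact funext fun a => Fin.ext ((hf.unique hf' hσ hσ hσ₂ hσ₂).2 hm a)

theorem IsCanonical.unique {σ' : SizedPerm} {α' : Fin σ'.1 → SizedPerm} (hσ : IsSimple σ.2)
    (hσ' : IsSimple σ'.2) (hσ₂ : 2 ≤ σ.1) (hσ'₂ : 2 ≤ σ'.1) (h : IsCanonical σ α)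
    (h' : IsCanonical σ' α') (heq : inflate σ α = inflate σ' α') :
    (⟨σ, α⟩ : Σ σ : SizedPerm, Fin σ.1 → SizedPerm) = ⟨σ', α'⟩ := by
  obtain ⟨f, hf, hα⟩ := h.exists_isBlockMap
  obtain ⟨f', hf', hα'⟩ := heq ▸ h'.exists_isBlockMap
  obtain rfl : σ = σ' := (hf.unique hf' hσ hσ' hσ₂ hσ'₂).1
  obtain rfl := h.isBlockMap_unique h' hσ hσ₂ hf hf' hα hα'
  obtain rfl : α = α' := funext fun i => (hα i).unique (hα' i)
  rfl

theorem isInflationOf_inflate_iff {ρ : SizedPerm} (hσ : IsSimple σ.2) (hρ : IsSimple ρ.2)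
    (hσ₂ : 2 ≤ σ.1) (hρ₂ : 2 ≤ ρ.1) (hα : ∀ i, 0 < (α i).1) :
    IsInflationOf (inflate σ α) ρ ↔ ρ = σ := by
  obtain ⟨f, hf, -⟩ := (isInflation_inflate σ α).exists_isBlockMap hα
  constructor
  · rintro ⟨g, hg⟩
    exact (hg.unique hf hρ hσ hρ₂ hσ₂).1
  · rintro rfl
    exact ⟨f, hf⟩

end CanonicalUnique

section Fiber

variable {X Y : Type*} [LinearOrder X] [LinearOrder Y] {f : X → Y} {i j : Y}

theorem lt_iff_of_apply_ne (hf : Monotone f) {a b : X} (hab : f a ≠ f b) :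
    a < b ↔ f a < f b :=
  ⟨fun h => (hf h.le).lt_of_ne hab, hf.reflect_lt⟩

theorem coe_fiber_covBy_coe_iff (hf : Monotone f) {a b : {a // f a = i}} :
    (a : X) ⋖ b ↔ a ⋖ b := by
  refine Set.OrdConnected.apply_covBy_apply_iff (OrderEmbedding.subtype fun a => f a = i) ?_
  rw [OrderEmbedding.coe_subtype, Subtype.range_coe_subtype]
  exact (Set.ordConnected_singleton (a := i)).preimage_mono hf

theorem isMin_coe_fiber_iff (hf : Monotone f) (hs : Function.Surjective f) {a : {a // f a = i}} :
    IsMin (a : X) ↔ IsMin i ∧ IsMin a := by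
  simp only [isMin_iff_forall_not_lt]
  refine ⟨fun h => ⟨fun l hl => ?_, fun b => h b⟩, fun ⟨hi, ha⟩ c hc => ?_⟩
  · obtain ⟨c, rfl⟩ := hs l
    exact h c (hf.reflect_lt (hl.trans_le a.2.ge))
  · rcases ((hf hc.le).trans_eq a.2).lt_or_eq with hci | hci
    exacts [hi _ hci, ha ⟨c, hci⟩ hc]

theorem isMax_coe_fiber_iff (hf : Monotone f) (hs : Function.Surjective f) {a : {a // f a = i}} :
    IsMax (a : X) ↔ IsMax i ∧ IsMax a :=
  isMin_coe_fiber_iff (X := Xᵒᵈ) (Y := Yᵒᵈ) hf.dual hs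

theorem coe_fiber_covBy_coe_iff_of_ne (hf : Monotone f) (hs : Function.Surjective f) (hij : i ≠ j)
    {a : {a // f a = i}} {b : {b // f b = j}} : (a : X) ⋖ b ↔ i ⋖ j ∧ IsMax a ∧ IsMin b := by
  obtain ⟨a, rfl⟩ := a
  obtain ⟨b, rfl⟩ := b
  simp only [isMin_iff_forall_not_lt, isMax_iff_forall_not_lt]
  constructor
  · rintro ⟨hab, hcov⟩
    refine ⟨⟨(hf hab.le).lt_of_ne hij, fun l hil hlj => ?_⟩, fun c hc => ?_, fun c hc => ?_⟩
    · obtain ⟨c, rfl⟩ := hs l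
      exact hcov (hf.reflect_lt hil) (hf.reflect_lt hlj)
    · exact hcov hc (hf.reflect_lt (by rw [c.2]; exact (hf hab.le).lt_of_ne hij))
    · exact hcov (hf.reflect_lt (by rw [c.2]; exact (hf hab.le).lt_of_ne hij)) hc
  · rintro ⟨⟨hlt, hcov⟩, hmax, hmin⟩
    refine ⟨hf.reflect_lt hlt, fun c hac hcb => ?_⟩
    rcases (hf hac.le).eq_or_lt with hc | hc
    · exact hmax ⟨c, hc.symm⟩ hac
    rcases (hf hcb.le).eq_or_lt with hc' | hc'
    · exact hmin ⟨c, hc'⟩ hcb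
    · exact hcov hc hc'

end Fiber

section SameProfile

variable {ι κ X X' X'' Y A A' A'' B : Type*} [LinearOrder X] [LinearOrder X'] [LinearOrder X'']
  [LinearOrder Y] [LinearOrder A] [LinearOrder A'] [LinearOrder A''] [LinearOrder B]
  {Q : X → A} {Q' : X' → A'} {Q'' : X'' → A''} {R : Y → B} {x : ι → X} {x' : ι → X'} {x'' : ι → X''}

/-- The tuples `x` and `x'` of points of the plots of `Q` and `Q'` have the same relative order of
positions and of values, the same adjacencies of positions, and the same entries at the first and
last positions. -/
structure SameProfile (Q : X → A) (x : ι → X) (Q' : X' → A') (x' : ι → X') : Prop where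
  lt_iff : ∀ s t, x s < x t ↔ x' s < x' t
  value_lt_iff : ∀ s t, Q (x s) < Q (x t) ↔ Q' (x' s) < Q' (x' t)
  covBy_iff : ∀ s t, x s ⋖ x t ↔ x' s ⋖ x' t
  isMin_iff : ∀ s, IsMin (x s) ↔ IsMin (x' s)
  isMax_iff : ∀ s, IsMax (x s) ↔ IsMax (x' s)

theorem SameProfile.symm (h : SameProfile Q x Q' x') : SameProfile Q' x' Q x where
  lt_iff s t := (h.lt_iff s t).symm
  value_lt_iff s t := (h.value_lt_iff s t).symm
  covBy_iff s t := (h.covBy_iff s t).symm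
  isMin_iff s := (h.isMin_iff s).symm
  isMax_iff s := (h.isMax_iff s).symm

theorem SameProfile.trans (h : SameProfile Q x Q' x') (h' : SameProfile Q' x' Q'' x'') :
    SameProfile Q x Q'' x'' where
  lt_iff s t := (h.lt_iff s t).trans (h'.lt_iff s t)
  value_lt_iff s t := (h.value_lt_iff s t).trans (h'.value_lt_iff s t)
  covBy_iff s t := (h.covBy_iff s t).trans (h'.covBy_iff s t)
  isMin_iff s := (h.isMin_iff s).trans (h'.isMin_iff s)
  isMax_iff s := (h.isMax_iff s).trans (h'.isMax_iff s)

theorem SameProfile.comp (h : SameProfile Q x Q' x') (u : κ → ι) :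
    SameProfile Q (x ∘ u) Q' (x' ∘ u) where
  lt_iff s t := h.lt_iff (u s) (u t)
  value_lt_iff s t := h.value_lt_iff (u s) (u t)
  covBy_iff s t := h.covBy_iff (u s) (u t)
  isMin_iff s := h.isMin_iff (u s)
  isMax_iff s := h.isMax_iff (u s)

theorem sameProfile_orderIso (e : X ≃o X') (he : ∀ a b, Q a < Q b ↔ Q' (e a) < Q' (e b))
    (x : ι → X) : SameProfile Q x Q' (e ∘ x) where
  lt_iff _ _ := e.lt_iff_lt.symm
  value_lt_iff _ _ := he _ _
  covBy_iff _ _ := (apply_covBy_apply_iff e).symm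
  isMin_iff _ := e.isMin_apply.symm
  isMax_iff _ := e.isMax_apply.symm

theorem IsBlockMap.sameProfile {f : X → Y} {f' : X' → Y} (hf : IsBlockMap Q R f)
    (hf' : IsBlockMap Q' R f') (hR : Function.Injective R)
    (y : ∀ i, {s // f (x s) = i} → {a // f' a = i})
    (h : ∀ i, SameProfile (fun a : {a // f a = i} => Q a)
      (fun s : {s // f (x s) = i} => ⟨x s, s.2⟩) (fun a : {a // f' a = i} => Q' a) (y i)) :
    SameProfile Q x Q' fun s => (y (f (x s)) ⟨s, rfl⟩ : X') := by
  have hfy : ∀ s, f' (y (f (x s)) ⟨s, rfl⟩) = f (x s) := fun s => (y (f (x s)) ⟨s, rfl⟩).2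
  have hy : ∀ s i (hs : f (x s) = i), (y (f (x s)) ⟨s, rfl⟩ : X') = y i ⟨s, hs⟩ := by
    rintro s _ rfl
    rfl
  have hne : ∀ {s t}, f (x s) ≠ f (x t) →
      f' (y (f (x s)) ⟨s, rfl⟩) ≠ f' (y (f (x t)) ⟨t, rfl⟩) := fun hst => by rwa [hfy, hfy]
  refine ⟨fun s t => ?_, fun s t => ?_, fun s t => ?_, fun s => ?_, fun s => ?_⟩
  · by_cases hst : f (x s) = f (x t)
    · rw [hy s _ hst]
      exact (h (f (x t))).lt_iff ⟨s, hst⟩ ⟨t, rfl⟩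
    · rw [lt_iff_of_apply_ne hf.monotone hst, lt_iff_of_apply_ne hf'.monotone (hne hst), hfy, hfy]
  · by_cases hst : f (x s) = f (x t)
    · rw [hy s _ hst]
      exact (h (f (x t))).value_lt_iff ⟨s, hst⟩ ⟨t, rfl⟩
    · rw [hf.lt_iff hR hst, hf'.lt_iff hR (hne hst), hfy, hfy]
  · by_cases hst : f (x s) = f (x t)
    · rw [hy s _ hst, coe_fiber_covBy_coe_iff hf'.monotone,
        ← (h (f (x t))).covBy_iff ⟨s, hst⟩ ⟨t, rfl⟩]
      exact coe_fiber_covBy_coe_iff hf.monotone (a := ⟨x s, hst⟩) (b := ⟨x t, rfl⟩)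
    · rw [coe_fiber_covBy_coe_iff_of_ne hf'.monotone hf'.surjective hst,
        ← (h (f (x s))).isMax_iff, ← (h (f (x t))).isMin_iff]
      exact coe_fiber_covBy_coe_iff_of_ne hf.monotone hf.surjective hst
        (a := ⟨x s, rfl⟩) (b := ⟨x t, rfl⟩)
  · rw [isMin_coe_fiber_iff hf'.monotone hf'.surjective, ← (h (f (x s))).isMin_iff]
    exact isMin_coe_fiber_iff hf.monotone hf.surjective (a := ⟨x s, rfl⟩)
  · rw [isMax_coe_fiber_iff hf'.monotone hf'.surjective, ← (h (f (x s))).isMax_iff]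
    exact isMax_coe_fiber_iff hf.monotone hf.surjective (a := ⟨x s, rfl⟩)

end SameProfile

/-- The possible configurations of a `k`-tuple of entries of a permutation. -/
abbrev TupleProfile (k : ℕ) : Type :=
  (Fin k → Fin k → Prop) × (Fin k → Fin k → Prop) × (Fin k → Fin k → Prop) ×
    (Fin k → Prop) × (Fin k → Prop)

/-- The configuration of a tuple `x` of entries of `π`: the order of the positions and of the
values, which positions are adjacent, and which are the first and the last one. -/
def tupleProfile {k n : ℕ} (π : Perm n) (x : Fin k → Fin n) : TupleProfile k :=
  (fun s t => x s < x t, fun s t => π (x s) < π (x t), fun s t => x s ⋖ x t,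
    fun s => IsMin (x s), fun s => IsMax (x s))

theorem tupleProfile_eq_iff {k n m : ℕ} {π : Perm n} {ρ : Perm m} {x : Fin k → Fin n}
    {y : Fin k → Fin m} : tupleProfile π x = tupleProfile ρ y ↔ SameProfile π x ρ y := by
  refine ⟨fun h => ?_, fun ⟨h₁, h₂, h₃, h₄, h₅⟩ => ?_⟩
  · simp only [tupleProfile, Prod.mk.injEq, funext_iff, eq_iff_iff] at h
    exact ⟨h.1, h.2.1, h.2.2.1, h.2.2.2.1, h.2.2.2.2⟩
  · simp [tupleProfile, h₁, h₂, h₃, h₄, h₅]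

/-- The set of configurations of the `k`-tuples of entries of `p`. -/
def patternType (k : ℕ) (p : SizedPerm) : Set (TupleProfile k) :=
  Set.range fun x : Fin k → Fin p.1 => tupleProfile p.2 x

section PatternType

variable {k : ℕ} {p q τ : SizedPerm}

theorem exists_sameProfile {ι : Type*} [Fintype ι] (h : patternType k p ⊆ patternType k q)
    (hι : Fintype.card ι ≤ k) (x : ι → Fin p.1) : ∃ y : ι → Fin q.1, SameProfile p.2 x q.2 y := by
  rcases isEmpty_or_nonempty ι with hempty | hnonempty
  · exact ⟨isEmptyElim, by constructor <;> exact isEmptyElim⟩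
  obtain ⟨u⟩ : Nonempty (ι ↪ Fin k) := Function.Embedding.nonempty_of_card_le (by simpa using hι)
  obtain ⟨y, hy⟩ := h ⟨x ∘ Function.invFun u, rfl⟩
  have hxu : (x ∘ Function.invFun u) ∘ u = x := by
    rw [Function.comp_assoc, Function.invFun_comp u.injective, Function.comp_id]
  exact ⟨y ∘ u, hxu ▸ (tupleProfile_eq_iff.mp hy).symm.comp u⟩

theorem IsStandardization.exists_sameProfile {ι X X' A A' : Type*} [LinearOrder X] [LinearOrder X']
    [LinearOrder A] [LinearOrder A'] {Q : X → A} {Q' : X' → A'} [Fintype ι]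
    (hp : IsStandardization p Q) (hq : IsStandardization q Q')
    (h : patternType k p ⊆ patternType k q) (hι : Fintype.card ι ≤ k) (x : ι → X) :
    ∃ y : ι → X', SameProfile Q x Q' y := by
  obtain ⟨e, he⟩ := hp
  obtain ⟨e', he'⟩ := hq
  obtain ⟨y, hy⟩ := _root_.exists_sameProfile h hι (e.symm ∘ x)
  have hx : SameProfile Q x p.2 (e.symm ∘ x) :=
    sameProfile_orderIso e.symm (fun a b => by simp [he]) x
  exact ⟨e' ∘ y, (hx.trans hy).trans (sameProfile_orderIso e' he' y)⟩

theorem patternType_inflate_subset {σ : SizedPerm} {α α' : Fin σ.1 → SizedPerm}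
    (hα : ∀ i, 0 < (α i).1) (hα' : ∀ i, 0 < (α' i).1)
    (h : ∀ i, patternType k (α i) ⊆ patternType k (α' i)) :
    patternType k (inflate σ α) ⊆ patternType k (inflate σ α') := by
  obtain ⟨f, hf, hb⟩ := (isInflation_inflate σ α).exists_isBlockMap hα
  obtain ⟨f', hf', hb'⟩ := (isInflation_inflate σ α').exists_isBlockMap hα'
  rintro _ ⟨x, rfl⟩
  have hcard : ∀ i, Fintype.card {s // f (x s) = i} ≤ k := fun i => by
    simpa using Fintype.card_subtype_le fun s => f (x s) = i
  choose y hy using fun i => (hb i).exists_sameProfile (hb' i) (h i) (hcard i)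
    fun s => ⟨x s, s.2⟩
  exact ⟨_, (tupleProfile_eq_iff.mpr (hf.sameProfile hf' σ.2.injective y hy)).symm⟩

theorem Contains.of_patternType (h : patternType k p ⊆ patternType k q) (hτ : τ.1 ≤ k)
    (hc : Contains τ.2 p.2) : Contains τ.2 q.2 := by
  obtain ⟨x, hx, hx'⟩ := hc
  obtain ⟨y, hy⟩ := exists_sameProfile h (by simpa using hτ) x
  exact ⟨y, fun s t hst => (hy.lt_iff s t).mp (hx hst),
    fun s t => (hy.value_lt_iff s t).symm.trans (hx' s t)⟩

theorem Alternating.of_patternType (hk : 3 ≤ k) (h : patternType k p ⊆ patternType k q)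
    (hq : Alternating q.2) : Alternating p.2 := by
  intro i hi
  obtain ⟨y, hy⟩ := exists_sameProfile h (by simpa using hk)
    ![⟨i, by omega⟩, ⟨i + 1, by omega⟩, ⟨i + 2, hi⟩]
  have hcov : ∀ {n : ℕ} {a b : Fin n}, a ⋖ b ↔ a.val + 1 = b.val := by
    simp [Fin.covBy_iff, Nat.covBy_iff_add_one_eq]
  have hy₁ : (y 0).val + 1 = (y 1).val := hcov.mp ((hy.covBy_iff 0 1).mp (hcov.mpr rfl))
  have hy₂ : (y 1).val + 1 = (y 2).val := hcov.mp ((hy.covBy_iff 1 2).mp (hcov.mpr rfl))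
  have halt := hq (y 0) (by omega)
  rw [show (⟨(y 0).val + 1, by omega⟩ : Fin q.1) = y 1 from Fin.ext hy₁,
    show (⟨(y 0).val + 2, by omega⟩ : Fin q.1) = y 2 from Fin.ext (by simp only; omega),
    Fin.eta, ← hy.value_lt_iff, ← hy.value_lt_iff, ← hy.value_lt_iff, ← hy.value_lt_iff] at halt
  exact halt

end PatternType

section Containment

variable {p q σ : SizedPerm} {α α' : Fin σ.1 → SizedPerm}

/-- The containment order on permutations of all lengths. -/
def Containment (p q : SizedPerm) : Prop := Contains p.2 q.2

instance : IsPreorder SizedPerm Containment where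
  refl _ := ⟨id, strictMono_id, fun _ _ => Iff.rfl⟩
  trans _ _ _ := by
    rintro ⟨f, hf, hf'⟩ ⟨g, hg, hg'⟩
    exact ⟨g ∘ f, hg.comp hf, fun s t => (hg' _ _).trans (hf' s t)⟩

theorem containment_of_size_le_one (hp : p.1 ≤ 1) (hpq : p.1 ≤ q.1) : Containment p q := by
  have := Fin.subsingleton_iff_le_one.mpr hp
  exact ⟨Fin.castLE hpq, Fin.strictMono_castLE hpq, fun s t => by simp [Subsingleton.elim s t]⟩

theorem IsStandardization.containment {X X' A A' : Type*} [LinearOrder X] [LinearOrder X']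
    [LinearOrder A] [LinearOrder A'] {Q : X → A} {Q' : X' → A'} (hp : IsStandardization p Q)
    (hq : IsStandardization q Q') {g : X → X'} (hg : StrictMono g)
    (hg' : ∀ a b, Q' (g a) < Q' (g b) ↔ Q a < Q b) : Containment p q := by
  obtain ⟨e, he⟩ := hp
  obtain ⟨d, hd⟩ := hq
  exact ⟨d.symm ∘ g ∘ e, d.symm.strictMono.comp (hg.comp e.strictMono), fun s t => by
    simp [hd, hg', he]⟩

theorem containment_inflate_inflate (h : ∀ i, Containment (α i) (α' i)) :
    Containment (inflate σ α) (inflate σ α') := by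
  choose g hg hg' using h
  let F : (Σₗ i, Fin (α i).1) → Σₗ i, Fin (α' i).1 := fun x =>
    toLex ⟨(ofLex x).1, g (ofLex x).1 (ofLex x).2⟩
  refine (isInflation_inflate σ α).containment (isInflation_inflate σ α') (g := F) ?_ fun x y => ?_
  · rintro _ _ (⟨a, b, hij⟩ | ⟨a, b, hab⟩)
    exacts [Sigma.Lex.left _ _ hij, Sigma.Lex.right _ _ (hg _ hab)]
  · obtain ⟨⟨i, a⟩, rfl⟩ := toLex.surjective x
    obtain ⟨⟨j, b⟩, rfl⟩ := toLex.surjective y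
    rcases eq_or_ne i j with rfl | hij
    · exact inflationValue_lt_iff.trans ((hg' i a b).trans inflationValue_lt_iff.symm)
    · simp [F, inflationValue, Prod.Lex.toLex_lt_toLex, hij]

theorem containment_inflate (hα : ∀ i, 0 < (α i).1) : Containment σ (inflate σ α) := by
  obtain ⟨f, hf, -⟩ := (isInflation_inflate σ α).exists_isBlockMap hα
  exact hf.contains

theorem containment_block_inflate (hα : ∀ i, 0 < (α i).1) (i : Fin σ.1) :
    Containment (α i) (inflate σ α) := by
  obtain ⟨f, -, hf⟩ := (isInflation_inflate σ α).exists_isBlockMap hα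
  exact (hf i).contains

theorem size_block_lt (hσ : 2 ≤ σ.1) (hα : ∀ i, 0 < (α i).1) (i : Fin σ.1) :
    (α i).1 < (inflate σ α).1 := by
  have := Fin.nontrivial_iff_two_le.mpr hσ
  obtain ⟨j, hj⟩ := exists_ne i
  rw [size_inflate]
  exact Finset.single_lt_sum (f := fun i => (α i).1) hj (Finset.mem_univ i) (Finset.mem_univ j)
    (hα j) fun _ _ _ => Nat.zero_le _

end Containment

section PartialWellOrder

/-- The permutations obtained by inflating elements of `S` by elements of `B`. -/
def inflations (S B : Set SizedPerm) : Set SizedPerm :=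
  ⋃ σ ∈ S, inflate σ '' Set.univ.pi fun _ => B

theorem mem_inflations {S B : Set SizedPerm} {p : SizedPerm} : p ∈ inflations S B ↔
    ∃ σ ∈ S, ∃ α : Fin σ.1 → SizedPerm, (∀ i, α i ∈ B) ∧ inflate σ α = p := by
  simp [inflations, Set.mem_pi]

theorem partiallyWellOrderedOn_inflations {S B : Set SizedPerm} (hS : S.Finite)
    (hB : B.PartiallyWellOrderedOn Containment) :
    (inflations S B).PartiallyWellOrderedOn Containment := by
  have hunion := (Finset.partiallyWellOrderedOn_bUnion (r := Containment) hS.toFinset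
    (f := fun σ => inflate σ '' Set.univ.pi fun _ => B)).mpr fun σ _ =>
      (Set.PartiallyWellOrderedOn.pi fun _ => hB).image_of_monotone_on
        fun _ _ _ _ h => containment_inflate_inflate h
  simpa only [inflations, Set.Finite.mem_toFinset] using hunion

variable {X : Type*} {r : X → X → Prop} {A D : Set X}

open Set.PartiallyWellOrderedOn in
/-- Nash-Williams: replacing a tail of a minimal bad sequence by a bad sequence of smaller elements
below its terms would contradict minimality. -/
theorem partiallyWellOrderedOn_of_isMinBadSeq [IsPreorder X r] (hA : ∀ x ∈ A, ∀ y, r y x → y ∈ A)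
    {rk : X → ℕ} {f : ℕ → X} (hf : IsBadSeq r A f) (hmin : ∀ n, IsMinBadSeq r rk A n f) :
    {x | ∃ n, r x (f n) ∧ rk x < rk (f n)}.PartiallyWellOrderedOn r := by
  rw [iff_forall_not_isBadSeq]
  rintro b ⟨hb, hbad⟩
  choose k hk hrk using hb
  let j := Function.argmin k
  have hj : ∀ i, k j ≤ k i := fun i => Function.argmin_le k i
  let b' : ℕ → X := fun m => if m < k j then f m else b (j + (m - k j))
  have hb'_mem : ∀ m, b' m ∈ A := fun m => by
    simp only [b']
    split_ifs
    exacts [hf.1 m, hA _ (hf.1 _) _ (hk _)]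
  have hb'_bad : ∀ m n, m < n → ¬ r (b' m) (b' n) := fun m n hmn => by
    simp only [b']
    split_ifs with hm hn hn
    · exact hf.2 m n hmn
    · exact fun h => hf.2 m _ (hm.trans_le (hj _)) (_root_.trans h (hk _))
    · omega
    · exact hbad _ _ (by omega)
  exact hmin (k j) b' (fun m hm => (if_pos hm).symm) (by simpa [b'] using hrk j)
    ⟨hb'_mem, hb'_bad⟩

theorem exists_finset_of_partiallyWellOrderedOn (hD : D.PartiallyWellOrderedOn r) :
    ∃ F : Finset X, ↑F ⊆ D ∧ ∀ x ∈ D, ∃ y ∈ F, r y x := by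
  by_contra! hF
  obtain ⟨f, hf, hbad⟩ := exists_seq_of_forall_finset_exists (· ∈ D) (fun x y => ¬ r x y) hF
  obtain ⟨m, n, hmn, h⟩ := hD.exists_lt hf
  exact hbad m n hmn h

end PartialWellOrder

section PermClass

variable (C : ∀ n, Set (Perm n))

/-- The simple permutations of length at least two in a class. -/
def simples : Set SizedPerm := {p | p.2 ∈ C p.1 ∧ 2 ≤ p.1 ∧ IsSimple p.2}

/-- The elements of a class, of all lengths. -/
def elements : Set SizedPerm := {p | p.2 ∈ C p.1}

variable {C}

theorem FinitelyManySimples.finite_simples (hfin : FinitelyManySimples C) : (simples C).Finite :=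
  hfin.subset fun _ h => ⟨h.1, h.2.2⟩

theorem IsPermClass.mem_elements (hC : IsPermClass C) {p q : SizedPerm} (hq : q ∈ elements C)
    (h : Containment p q) : p ∈ elements C :=
  hC _ _ hq h

theorem IsPermClass.exists_isCanonical (hC : IsPermClass C) {p : SizedPerm} (hp : p ∈ elements C)
    (hp₂ : 2 ≤ p.1) : ∃ σ ∈ simples C, ∃ α : Fin σ.1 → SizedPerm, IsCanonical σ α ∧
      (∀ i, α i ∈ elements C) ∧ inflate σ α = p := by
  obtain ⟨σ, hσ, hσs, α, hα, rfl⟩ := _root_.exists_isCanonical hp₂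
  exact ⟨σ, ⟨hC.mem_elements hp (containment_inflate hα.pos), hσ, hσs⟩, α, hα,
    fun i => hC.mem_elements hp (containment_block_inflate hα.pos i), rfl⟩

theorem IsPermClass.partiallyWellOrderedOn (hC : IsPermClass C) (hfin : FinitelyManySimples C) :
    (elements C).PartiallyWellOrderedOn Containment := by
  rw [Set.PartiallyWellOrderedOn.iff_not_exists_isMinBadSeq (fun p : SizedPerm => p.1)]
  rintro ⟨f, hf, hmin⟩
  have hsize : ∀ n, 2 ≤ (f n).1 := fun n => by
    by_contra! hn
    have hlt : (f (n + 1)).1 < (f n).1 := by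
      by_contra! hle
      exact hf.2 n (n + 1) n.lt_succ_self (containment_of_size_le_one (by omega) hle)
    exact hf.2 (n + 1) (n + 2) (n + 1).lt_succ_self
      (containment_of_size_le_one (by omega) (by omega))
  have hpwo := partiallyWellOrderedOn_inflations hfin.finite_simples <|
    partiallyWellOrderedOn_of_isMinBadSeq (fun _ hx _ h => hC.mem_elements hx h) hf hmin
  refine (Set.PartiallyWellOrderedOn.iff_forall_not_isBadSeq _ _).mp hpwo f ⟨fun n => ?_, hf.2⟩
  obtain ⟨σ, hσ, α, hα, -, hfn⟩ := hC.exists_isCanonical (hf.1 n) (hsize n)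
  refine mem_inflations.mpr ⟨σ, hσ, α, fun i => ⟨n, ?_⟩, hfn⟩
  rw [← hfn]
  exact ⟨containment_block_inflate hα.pos i, size_block_lt hσ.2.1 hα.pos i⟩

theorem IsPermClass.exists_pattern_bound (hC : IsPermClass C) (hfin : FinitelyManySimples C) :
    ∃ k, ∀ p ∈ inflations (simples C) (elements C), p ∉ elements C →
      ∃ τ ∉ elements C, τ.1 ≤ k ∧ Containment τ p := by
  have hpwo := partiallyWellOrderedOn_inflations hfin.finite_simples
    (hC.partiallyWellOrderedOn hfin)
  obtain ⟨F, hF, hbasis⟩ := exists_finset_of_partiallyWellOrderedOn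
    (hpwo.mono (Set.sdiff_subset (t := elements C)))
  refine ⟨F.sup Sigma.fst, fun p hp hpC => ?_⟩
  obtain ⟨τ, hτ, hτp⟩ := hbasis p ⟨hp, hpC⟩
  exact ⟨τ, (hF hτ).2, Finset.le_sup (f := Sigma.fst) hτ, hτp⟩

end PermClass

section QueryComplete

variable {T : Type*}

/-- A type function is query-complete if the type of an inflation of a simple permutation by
nonempty blocks is determined by that simple permutation and the types of the blocks. A finite
query-complete set of properties, in the sense of Brignall, Huczynska and Vatter, is encoded by the
type function sending a permutation to the set of properties it satisfies. -/
def IsQueryComplete (ty : SizedPerm → T) : Prop :=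
  ∀ ⦃σ : SizedPerm⦄, 2 ≤ σ.1 → IsSimple σ.2 → ∀ ⦃α α' : Fin σ.1 → SizedPerm⦄, (∀ i, 0 < (α i).1) →
    (∀ i, 0 < (α' i).1) → (∀ i, ty (α i) = ty (α' i)) → ty (inflate σ α) = ty (inflate σ α')

theorem isQueryComplete_patternType (k : ℕ) : IsQueryComplete (patternType k) :=
  fun _ _ _ _ _ hα hα' h =>
    (patternType_inflate_subset hα hα' fun i => (h i).le).antisymm
      (patternType_inflate_subset hα' hα fun i => (h i).ge)

/-- A query-complete type function is adapted to the class `C` if the type of a permutation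
determines of which simple permutations of `C` it is an inflation and, for inflations of simple
permutations of `C` by elements of `C`, whether it belongs to `C`. -/
structure IsAdapted (C : ∀ n, Set (Perm n)) (ty : SizedPerm → T) : Prop where
  isQueryComplete : IsQueryComplete ty
  isInflationOf_of_eq : ∀ ⦃p q⦄, ty p = ty q → ∀ σ ∈ simples C, IsInflationOf p σ →
    IsInflationOf q σ
  mem_of_eq : ∀ ⦃p q⦄, ty p = ty q → q ∈ inflations (simples C) (elements C) → p ∈ elements C →
    q ∈ elements C

/-- The refinement of `ty` which also records the patterns on `k` entries and the simple
permutations of `C` which a permutation is an inflation of. -/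
def classType (C : ∀ n, Set (Perm n)) (k : ℕ) (ty : SizedPerm → T) (p : SizedPerm) :
    Set (TupleProfile k) × Set (simples C) × T :=
  (patternType k p, {σ | IsInflationOf p σ.1}, ty p)

variable {C : ∀ n, Set (Perm n)} {k : ℕ} {ty : SizedPerm → T}

theorem classType_eq_iff {p q : SizedPerm} : classType C k ty p = classType C k ty q ↔
    patternType k p = patternType k q ∧
      (∀ σ ∈ simples C, IsInflationOf p σ ↔ IsInflationOf q σ) ∧ ty p = ty q := by
  simp [classType, Set.ext_iff]

theorem isQueryComplete_classType (hty : IsQueryComplete ty) :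
    IsQueryComplete (classType C k ty) := by
  intro σ hσ₂ hσ α α' hα hα' h
  simp only [classType_eq_iff] at h ⊢
  refine ⟨isQueryComplete_patternType k hσ₂ hσ hα hα' fun i => (h i).1, fun ρ hρ => ?_,
    hty hσ₂ hσ hα hα' fun i => (h i).2.2⟩
  rw [isInflationOf_inflate_iff hσ hρ.2.2 hσ₂ hρ.2.1 hα,
    isInflationOf_inflate_iff hσ hρ.2.2 hσ₂ hρ.2.1 hα']

theorem IsQueryComplete.exists_isAdapted_classType (hty : IsQueryComplete ty)
    (hC : IsPermClass C) (hfin : FinitelyManySimples C) : ∃ k, IsAdapted C (classType C k ty) := by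
  obtain ⟨k, hk⟩ := hC.exists_pattern_bound hfin
  refine ⟨k, isQueryComplete_classType hty, fun p q h σ hσ => ((classType_eq_iff.mp h).2.1 σ hσ).mp,
    fun p q h hq hpC => ?_⟩
  by_contra hqC
  obtain ⟨τ, hτ, hτk, hτq⟩ := hk q hq hqC
  exact hτ (hC.mem_elements hpC (hτq.of_patternType (classType_eq_iff.mp h).1.ge hτk))

theorem IsAdapted.isCanonical (hty : IsAdapted C ty) {σ : SizedPerm} (hσ : σ ∈ simples C)
    {α α' : Fin σ.1 → SizedPerm} (hα' : ∀ i, 0 < (α' i).1) (h : ∀ i, ty (α i) = ty (α' i))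
    (hα : IsCanonical σ α) : IsCanonical σ α' where
  pos := hα'
  not_isInflationOf h₂ i hi hd :=
    hα.not_isInflationOf h₂ i hi (hty.isInflationOf_of_eq (h i).symm σ hσ hd)

end QueryComplete

section System

variable {T : Type*} (C : ∀ n, Set (Perm n)) (ty : SizedPerm → T) (t : T)

/-- The nonempty elements of `C` of type `t`. -/
abbrev ElementsOfType : Type :=
  {p : SizedPerm // p ∈ elements C ∧ 0 < p.1 ∧ ty p = t}

/-- The simple permutations and the types of blocks whose canonical inflations are elements of `C`
of type `t`. These index the nonlinear terms of the equation for `ElementsOfType C ty t`. -/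
abbrev InflationRule : Type _ :=
  {g : Σ σ : simples C, Fin σ.1.1 → T // ∃ α : Fin g.1.1.1 → SizedPerm,
    (∀ i, ty (α i) = g.2 i) ∧ IsCanonical g.1.1 α ∧ inflate g.1.1 α ∈ elements C ∧
      ty (inflate g.1.1 α) = t}

/-- A rule together with a choice of blocks of the required types. -/
abbrev RuleInstance : Type _ :=
  Σ g : InflationRule C ty t, ∀ i, ElementsOfType C ty (g.1.2 i)

variable {C ty t}

/-- The permutation obtained from a rule and the chosen blocks. -/
noncomputable def ruleInflate (x : RuleInstance C ty t) : SizedPerm :=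
  inflate x.1.1.1.1 fun i => (x.2 i).1

theorem size_ruleInflate (x : RuleInstance C ty t) : (ruleInflate x).1 = ∑ i, (x.2 i).1.1 :=
  size_inflate _ _

theorem IsAdapted.isCanonical_rule (hty : IsAdapted C ty) (x : RuleInstance C ty t) :
    IsCanonical x.1.1.1.1 fun i => (x.2 i).1 := by
  obtain ⟨α, hα, hcan, -⟩ := x.1.2
  exact hty.isCanonical x.1.1.1.2 (fun i => (x.2 i).2.2.1)
    (fun i => (hα i).trans (x.2 i).2.2.2.symm) hcan

theorem IsAdapted.two_le_size_ruleInflate (hty : IsAdapted C ty) (x : RuleInstance C ty t) :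
    2 ≤ (ruleInflate x).1 := by
  have hσ : 2 ≤ x.1.1.1.1.1 := x.1.1.1.2.2.1
  have hpos := (hty.isCanonical_rule x).pos
  exact Nat.succ_le_of_lt <|
    (Nat.succ_le_of_lt (hpos ⟨0, by omega⟩)).trans_lt (size_block_lt hσ hpos ⟨0, by omega⟩)

theorem IsAdapted.ruleInflate_mem (hty : IsAdapted C ty) (x : RuleInstance C ty t) :
    ruleInflate x ∈ elements C ∧ 0 < (ruleInflate x).1 ∧ ty (ruleInflate x) = t := by
  obtain ⟨α, hα, hcan, hmem, htype⟩ := x.1.2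
  have hσ := x.1.1.1.2
  have heq : ty (inflate x.1.1.1.1 α) = ty (ruleInflate x) :=
    hty.isQueryComplete hσ.2.1 hσ.2.2 hcan.pos (fun i => (x.2 i).2.2.1) fun i =>
      (hα i).trans (x.2 i).2.2.2.symm
  exact ⟨hty.mem_of_eq heq (mem_inflations.mpr ⟨_, hσ, _, fun i => (x.2 i).2.1, rfl⟩) hmem,
    (hty.two_le_size_ruleInflate x).trans_lt' Nat.zero_lt_two, heq.symm.trans htype⟩

theorem IsAdapted.ruleInflate_injective (hty : IsAdapted C ty) :
    Function.Injective (ruleInflate : RuleInstance C ty t → SizedPerm) := by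
  rintro ⟨⟨⟨⟨σ, hσ⟩, τ⟩, hg⟩, β⟩ ⟨⟨⟨⟨σ', hσ'⟩, τ'⟩, hg'⟩, β'⟩ h
  have heq := IsCanonical.unique hσ.2.2 hσ'.2.2 hσ.2.1 hσ'.2.1 (hty.isCanonical_rule ⟨_, β⟩)
    (hty.isCanonical_rule ⟨_, β'⟩) h
  obtain rfl : σ = σ' := congrArg Sigma.fst heq
  have hβ : (fun i => (β i).1) = fun i => (β' i).1 := eq_of_heq (Sigma.mk.inj heq).2
  obtain rfl : τ = τ' := funext fun i =>
    (β i).2.2.2.symm.trans ((congrArg ty (congrFun hβ i)).trans (β' i).2.2.2)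
  obtain rfl : β = β' := funext fun i => Subtype.ext (congrFun hβ i)
  rfl

theorem IsPermClass.exists_ruleInflate_eq (hC : IsPermClass C) {p : SizedPerm}
    (hp : p ∈ elements C) (hp₂ : 2 ≤ p.1) : ∃ x : RuleInstance C ty (ty p), ruleInflate x = p := by
  obtain ⟨σ, hσ, α, hα, hαC, rfl⟩ := hC.exists_isCanonical hp hp₂
  exact ⟨⟨⟨⟨⟨σ, hσ⟩, fun i => ty (α i)⟩, α, fun _ => rfl, hα, hp, rfl⟩,
    fun i => ⟨α i, hαC i, hα.pos i, rfl⟩⟩, rfl⟩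

/-- The elements of length at least two correspond to the instances of rules. -/
noncomputable def ruleEquiv (hC : IsPermClass C) (hty : IsAdapted C ty) (t : T) :
    RuleInstance C ty t ≃ {p : ElementsOfType C ty t // ¬ p.1.1 = 1} :=
  Equiv.ofBijective
    (fun x => ⟨⟨ruleInflate x, hty.ruleInflate_mem x⟩,
      ne_of_gt (hty.two_le_size_ruleInflate x)⟩) <| by
    refine ⟨fun x y h => hty.ruleInflate_injective (congrArg (·.1.1) h), ?_⟩
    rintro ⟨⟨p, hpC, hpos, rfl⟩, hp⟩
    obtain ⟨x, hx⟩ := hC.exists_ruleInflate_eq hpC (by simp only at hp; omega)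
    exact ⟨x, Subtype.ext (Subtype.ext hx)⟩

instance (C : ∀ n, Set (Perm n)) (ty : SizedPerm → T) (t : T) (n : ℕ) :
    Finite {p : ElementsOfType C ty t // p.1.1 = n} :=
  Finite.of_surjective (fun π : {π : Perm n // (⟨n, π⟩ : SizedPerm) ∈ elements C ∧
      0 < n ∧ ty ⟨n, π⟩ = t} => ⟨⟨⟨n, π.1⟩, π.2⟩, rfl⟩) <| by
    rintro ⟨⟨⟨_, π⟩, hπ⟩, rfl⟩
    exact ⟨⟨π, hπ⟩, rfl⟩

/-- The generating function of the nonempty elements of `C` of type `t`. -/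
noncomputable def typeGenFun (C : ∀ n, Set (Perm n)) (ty : SizedPerm → T) (t : T) :
    PowerSeries ℚ :=
  sizeGenFun fun p : ElementsOfType C ty t => p.1.1

theorem constantCoeff_typeGenFun : PowerSeries.constantCoeff (typeGenFun C ty t) = 0 := by
  have : IsEmpty {p : ElementsOfType C ty t // p.1.1 = 0} := ⟨fun p => p.1.2.2.1.ne' p.2⟩
  rw [← PowerSeries.coeff_zero_eq_constantCoeff_apply, typeGenFun, coeff_sizeGenFun,
    Nat.card_of_isEmpty, Nat.cast_zero]

theorem IsAdapted.typeGenFun_eq (hC : IsPermClass C) (hty : IsAdapted C ty) (t : T)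
    [Fintype (InflationRule C ty t)] : typeGenFun C ty t =
      (Polynomial.C (Nat.card {p : ElementsOfType C ty t // p.1.1 = 1} : ℚ) * Polynomial.X :
        Polynomial ℚ) + ∑ g : InflationRule C ty t, ∏ i, typeGenFun C ty (g.1.2 i) := by
  have hone : (fun p : {p : ElementsOfType C ty t // p.1.1 = 1} => p.1.1.1) = fun _ => 1 :=
    funext fun p => p.2
  have hrule : (fun p : {p : ElementsOfType C ty t // ¬ p.1.1 = 1} => p.1.1.1) ∘
      ruleEquiv hC hty t = fun x => ∑ i, (x.2 i).1.1 := funext size_ruleInflate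
  have := fun (g : InflationRule C ty t) =>
    finite_sum_size_fiber fun i (p : ElementsOfType C ty (g.1.2 i)) => p.1.1
  rw [typeGenFun, sizeGenFun_eq_add_compl _ fun p => p.1.1 = 1, hone, sizeGenFun_const_one,
    ← sizeGenFun_comp_equiv _ (ruleEquiv hC hty t), hrule,
    sizeGenFun_sigma fun (g : InflationRule C ty t)
      (β : ∀ i, ElementsOfType C ty (g.1.2 i)) => ∑ i, (β i).1.1]
  simp only [typeGenFun, sizeGenFun_pi fun _ (p : ElementsOfType C ty _) => p.1.1]

theorem IsAdapted.isAlgebraic_typeGenFun [Finite T] (hC : IsPermClass C)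
    (hfin : FinitelyManySimples C) (hty : IsAdapted C ty) (t : T) :
    IsAlgebraic (Polynomial ℚ) (typeGenFun C ty t) := by
  have := hfin.finite_simples.to_subtype
  have (t : T) := Fintype.ofFinite (InflationRule C ty t)
  have (t : T) (g : InflationRule C ty t) : Nontrivial (Fin g.1.1.1.1) :=
    Fin.nontrivial_iff_two_le.mpr g.1.1.2.2.1
  exact isAlgebraic_of_eq_add_sum_prod (f := typeGenFun C ty)
    (fun t (g : InflationRule C ty t) => g.1.2) _ (fun _ => constantCoeff_typeGenFun)
    (fun t => hty.typeGenFun_eq hC t) t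

theorem genFun_eq_sum_typeGenFun (C : ∀ n, Set (Perm n)) (ty : SizedPerm → T) (S : Set T)
    [Fintype S] : (genFun fun n => {π | π ∈ C n ∧ ty ⟨n, π⟩ ∈ S}) =
      ∑ t : S, typeGenFun C ty t := by
  unfold typeGenFun
  rw [← sizeGenFun_sigma fun (t : S) (p : ElementsOfType C ty t) => p.1.1]
  ext n
  simp only [genFun, PowerSeries.coeff_mk, coeff_sizeGenFun]
  split_ifs with hn
  · subst hn
    have : IsEmpty {x : Σ t : S, ElementsOfType C ty t // x.2.1.1 = 0} :=
      ⟨fun x => x.1.2.2.2.1.ne' x.2⟩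
    rw [Nat.card_of_isEmpty, Nat.cast_zero]
  · congr 1
    refine Nat.card_congr (Equiv.ofBijective (fun π =>
      ⟨⟨⟨ty ⟨n, π.1⟩, π.2.2⟩, ⟨n, π.1⟩, π.2.1, Nat.pos_of_ne_zero hn, rfl⟩, rfl⟩)
      ⟨fun π ρ h => ?_, ?_⟩)
    · have hπρ : (⟨n, π.1⟩ : SizedPerm) = ⟨n, ρ.1⟩ := congrArg (·.1.2.1) h
      exact Subtype.ext (eq_of_heq (Sigma.mk.inj hπρ).2)
    · rintro ⟨⟨⟨t, ht⟩, ⟨m, π⟩, hπC, hpos, (rfl : ty ⟨m, π⟩ = t)⟩, rfl⟩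
      exact ⟨⟨π, hπC, ht⟩, rfl⟩

end System

theorem IsAlgebraicOverQx.of_isAlgebraic {f : PowerSeries ℚ} (hf : IsAlgebraic (Polynomial ℚ) f) :
    IsAlgebraicOverQx f := by
  obtain ⟨P, hP, hPf⟩ := hf
  exact ⟨P, hP, hPf⟩

theorem patternType_mem_image_alternating_iff {n : ℕ} {π : Perm n} :
    patternType 3 ⟨n, π⟩ ∈ patternType 3 '' {q | Alternating q.2} ↔ Alternating π :=
  ⟨fun ⟨_, hq, h⟩ => Alternating.of_patternType le_rfl h.ge hq, fun h => ⟨⟨n, π⟩, h, rfl⟩⟩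

theorem statement1_general (C : ∀ n, Set (Perm n)) (hC : IsPermClass C)
    (hfin : FinitelyManySimples C) {T : Type*} [Finite T] (ty : SizedPerm → T)
    (hty : IsQueryComplete ty) (S : Set T) :
    IsAlgebraicOverQx (genFun fun n => {π : Perm n | π ∈ C n ∧ ty ⟨n, π⟩ ∈ S}) := by
  classical
  obtain ⟨k, hk⟩ := hty.exists_isAdapted_classType hC hfin
  have := hfin.finite_simples.to_subtype
  have := Fintype.ofFinite {t : Set (TupleProfile k) × Set (simples C) × T | t.2.2 ∈ S}
  have hsum := genFun_eq_sum_typeGenFun C (classType C k ty) {t | t.2.2 ∈ S}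
  refine .of_isAlgebraic (hsum ▸ ?_)
  exact sum_mem (S := Subalgebra.algebraicClosure (Polynomial ℚ) (PowerSeries ℚ))
    fun t _ => hk.isAlgebraic_typeGenFun hC hfin t.1

/-- If `C` is a permutation class containing only finitely many simple permutations,
then the generating function of the set of alternating permutations in `C`
is algebraic over `ℚ[x]`. -/
theorem statement1 (C : ∀ n, Set (Perm n)) (hC : IsPermClass C)
    (hfin : FinitelyManySimples C) :
    IsAlgebraicOverQx (genFun fun n => {π : Perm n | π ∈ C n ∧ Alternating π}) := by
  simpa only [patternType_mem_image_alternating_iff] using statement1_general C hC hfin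
    (patternType 3) (isQueryComplete_patternType 3) (patternType 3 '' {q | Alternating q.2})
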